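/- Let X be a complemented subspace of X_p which contains a subspace Y isomorphic to X_p such that Y is complemented in X. Then there exist positive constants c and δ such that for every ε > 0 there is ε' with 0 < ε' < ε such that for every N ∈ ℕ there exist x ∈ X with ‖x‖ = 1 and a finite set E ⊆ {N, N+1, …} satisfying (a) ‖x_{|[1,N]}‖ < N^{-1}, (b) |x_{|E}|_2 ≥ δ·|x|_2, and (c) ε ≥ c·|x_{|E}|_2 ≥ ω(E)^{(p-2)/(2p)} ≥ ε'. -/

import Mathlib

open scoped ENNReal

noncomputable section

/-- The sequence space `ℓ_p` (of real sequences), for a real exponent `p`. -/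
abbrev SeqP (p : ℝ) := lp (fun _ : ℕ => ℝ) (ENNReal.ofReal p)

/-- The sequence space `ℓ_2` (of real sequences). -/
abbrev Seq2 := lp (fun _ : ℕ => ℝ) 2

/-- The space `X_{p,w}`, realized as the submodule of `ℓ_p ⊕_∞ ℓ_2` consisting of the
pairs `(x, y)` with `y n = w n * x n`.  Since the norm on the product is the maximum of
the two norms, this is exactly the completion of the finitely supported sequences under
`‖a‖ = max {|a|_p, |a|_{2,w}}`, the element with coordinates `a` being identified with
the pair `(a, w·a)`. -/
def XpwMod (p : ℝ) (w : ℕ → ℝ) : Submodule ℝ (SeqP p × Seq2) where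
  carrier := {z | ∀ n, (z.2 : ℕ → ℝ) n = w n * (z.1 : ℕ → ℝ) n}
  add_mem' := by
    intro a b ha hb n
    simp only [Prod.fst_add, Prod.snd_add, lp.coeFn_add, Pi.add_apply, ha n, hb n]
    ring
  zero_mem' := by
    intro n
    simp
  smul_mem' := by
    intro c a ha n
    simp only [Prod.smul_fst, Prod.smul_snd, lp.coeFn_smul, Pi.smul_apply, ha n,
      smul_eq_mul]
    ring

/-- The space `X_{p,w}` with its natural norm `‖a‖ = max {|a|_p, |a|_{2,w}}`. -/
def Xpw (p : ℝ) (w : ℕ → ℝ) : Type := ↥(XpwMod p w)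

variable {p : ℝ} {w : ℕ → ℝ}

instance [Fact (1 ≤ ENNReal.ofReal p)] : NormedAddCommGroup (Xpw p w) :=
  inferInstanceAs (NormedAddCommGroup ↥(XpwMod p w))

instance [Fact (1 ≤ ENNReal.ofReal p)] : NormedSpace ℝ (Xpw p w) :=
  inferInstanceAs (NormedSpace ℝ ↥(XpwMod p w))

/-- The pair of coordinates (in `ℓ_p` and in weighted `ℓ_2`) of an element of `X_{p,w}`. -/
def Xpw.pair (x : Xpw p w) : SeqP p × Seq2 := (show ↥(XpwMod p w) from x).val

/-- The underlying sequence of coordinates of an element of `X_{p,w}`. -/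
def seq (x : Xpw p w) : ℕ → ℝ := (Xpw.pair x).1

/-- `|x|_p` for `x ∈ X_{p,w}`. -/
def nrmP (x : Xpw p w) : ℝ := ‖(Xpw.pair x).1‖

/-- `|x|_2 = |x|_{2,w}` for `x ∈ X_{p,w}`. -/
def nrm2 (x : Xpw p w) : ℝ := ‖(Xpw.pair x).2‖

/-- The ratio `r(x) = |x|_2 / |x|_p`. -/
def ratio (x : Xpw p w) : ℝ := nrm2 x / nrmP x

/-- `ω(E) = ∑_{n ∈ E} w_n^{2p/(p-2)}`. -/
def omegaE (p : ℝ) (w : ℕ → ℝ) (E : Set ℕ) : ℝ :=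
  ∑' n : E, w (n : ℕ) ^ (2 * p / (p - 2))

/-- The pairing `⟨x, y⟩ = ∑_n x_n y_n w_n²`. -/
def pairW (w : ℕ → ℝ) (x y : Xpw p w) : ℝ :=
  ∑' n, seq x n * seq y n * w n ^ 2

/-- `w` is a weight sequence suitable for Rosenthal's space `X_p`: it is positive and for
every `ε > 0`, `∑_{w_n < ε} w_n^{2p/(p-2)} = ∞`. -/
def IsXpWeight (p : ℝ) (w : ℕ → ℝ) : Prop :=
  (∀ n, 0 < w n) ∧
    ∀ ε : ℝ, 0 < ε →
      (∑' n : {n : ℕ | w n < ε}, ENNReal.ofReal (w (n : ℕ) ^ (2 * p / (p - 2)))) = ⊤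

theorem memℓp_indicator {q : ℝ≥0∞} (E : Set ℕ) {f : ℕ → ℝ} (hf : Memℓp f q) :
    Memℓp (E.indicator f) q := by
  rcases ENNReal.trichotomy q with hq | hq | hq
  · subst hq
    refine memℓp_zero ((memℓp_zero_iff.mp hf).subset ?_)
    intro i hi
    simp only [Set.mem_setOf_eq] at hi ⊢
    intro h
    exact hi (by simp [Set.indicator_apply, h])
  · subst hq
    obtain ⟨C, hC⟩ := (memℓp_infty_iff.mp hf)
    refine memℓp_infty ⟨C, ?_⟩
    rintro x ⟨i, rfl⟩
    exact le_trans (norm_indicator_le_norm_self f i) (hC ⟨i, rfl⟩)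
  · refine memℓp_gen (Summable.of_nonneg_of_le (fun i => ?_) (fun i => ?_)
      (hf.summable hq))
    · positivity
    · exact Real.rpow_le_rpow (norm_nonneg _) (norm_indicator_le_norm_self f i) hq.le

/-- The restriction `x ↦ x_{|E}` of elements of `X_{p,w}` to a set `E` of coordinates. -/
def restrict (E : Set ℕ) (x : Xpw p w) : Xpw p w :=
  show ↥(XpwMod p w) from
  ⟨(⟨E.indicator ((Xpw.pair x).1 : ℕ → ℝ), memℓp_indicator E (lp.memℓp (Xpw.pair x).1)⟩,
    ⟨E.indicator ((Xpw.pair x).2 : ℕ → ℝ), memℓp_indicator E (lp.memℓp (Xpw.pair x).2)⟩), by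
    intro n
    change E.indicator ((Xpw.pair x).2 : ℕ → ℝ) n = w n * E.indicator ((Xpw.pair x).1 : ℕ → ℝ) n
    by_cases hn : n ∈ E
    · have h : ((Xpw.pair x).2 : ℕ → ℝ) n = w n * ((Xpw.pair x).1 : ℕ → ℝ) n :=
        (show ↥(XpwMod p w) from x).2 n
      simpa [Set.indicator_of_mem hn] using h
    · simp [Set.indicator_of_notMem hn]⟩

/-!
`X_{p,w}` is the discrete form of `L_p(ω) ∩ L_2(ω)`: in terms of the functions
`n ↦ x_n * w_n ^ (-2 / (p - 2))`, the atom `n` having measure `w_n ^ (2 * p / (p - 2))`, the two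
norms are the `L_p(ω)` and `L_2(ω)` norms. Let `S ∘ T` be the identity of `X_p` and let `f_j` be
the indicators of disjoint blocks of measure about a small `m`. Since `p > 2`, disjoint sums grow
in `X_{p,w}` no faster than the square root of the number of terms, so `T f_j` is weakly null, and
averaging over signs in `ℓ_2` gives `|T f_j|_2 ≤ K √m` for large `j`.

The functional `ψ_j = ⟨f_j, S ·⟩` takes a value of order `m` at `T f_j`. Weak nullness makes the
head of `T f_j` negligible, and the coordinates where `ψ_j` has small density contribute little,
because `|T f_j|_2` is small; the remaining coordinates form a finite set `E` far out with
`ω(E) ≤ C m` and `ψ_j((T f_j)_{|E}) ≥ m / 8`. If `|(T f_j)_{|E}|_2` were always much smaller than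
`√m`, then infinitely many such pieces could be chosen disjoint, and averaging over signs would
contradict the boundedness of `S`. Hence `|T f_j|_2` and `|(T f_j)_{|E}|_2` are both of order `√m`
while `‖T f_j‖` is of order `m ^ (1 / p)`; normalizing `T f_j` gives the vector sought.
-/

theorem map_sum_of_subsingleton_support {ι M N : Type*} [AddCommMonoid M] [AddCommMonoid N]
    {f : M → N} (hf : f 0 = 0) {s : Finset ι} {a : ι → M}
    (ha : (Function.support a).Subsingleton) : f (∑ i ∈ s, a i) = ∑ i ∈ s, f (a i) := by
  by_cases h : ∃ i ∈ s, a i ≠ 0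
  · obtain ⟨i, his, hi⟩ := h
    have hzero : ∀ j, j ≠ i → a j = 0 := fun j hji => by_contra fun hj => hji (ha hj hi)
    rw [Finset.sum_eq_single_of_mem i his fun j _ hji => hzero j hji,
      Finset.sum_eq_single_of_mem i his fun j _ hji => by rw [hzero j hji, hf]]
  · push Not at h
    rw [Finset.sum_eq_zero h, hf, Finset.sum_eq_zero fun i hi => by rw [h i hi, hf]]

-- Averaging over independent signs kills the off-diagonal terms; the induction chooses each new
-- sign so that its cross terms are nonnegative.
theorem exists_abs_eq_one_sum_bilin_le {ι M N : Type*} [AddCommGroup M] [Module ℝ M]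
    [AddCommGroup N] [Module ℝ N] (B : M →ₗ[ℝ] N →ₗ[ℝ] ℝ) (x : ι → M) (y : ι → N)
    (s : Finset ι) :
    ∃ σ : ι → ℝ, (∀ i, |σ i| = 1) ∧
      ∑ i ∈ s, B (x i) (y i) ≤ B (∑ i ∈ s, σ i • x i) (∑ i ∈ s, σ i • y i) := by
  classical
  induction s using Finset.induction_on with
  | empty => exact ⟨fun _ => 1, fun _ => abs_one, by simp⟩
  | insert a s ha ih =>
    obtain ⟨σ, hσ, hle⟩ := ih
    set u := ∑ i ∈ s, σ i • x i
    set v := ∑ i ∈ s, σ i • y i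
    obtain ⟨t, ht, hcross⟩ : ∃ t : ℝ, |t| = 1 ∧ 0 ≤ t * (B (x a) v + B u (y a)) := by
      rcases le_total 0 (B (x a) v + B u (y a)) with h | h
      · exact ⟨1, abs_one, by simpa only [one_mul] using h⟩
      · exact ⟨-1, by rw [abs_neg, abs_one], by linarith⟩
    have hupdate : ∀ i ∈ s, Function.update σ a t i = σ i := fun i hi =>
      Function.update_of_ne (ne_of_mem_of_not_mem hi ha) _ _
    have hx : ∑ i ∈ s, Function.update σ a t i • x i = u :=
      Finset.sum_congr rfl fun i hi => by rw [hupdate i hi]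
    have hy : ∑ i ∈ s, Function.update σ a t i • y i = v :=
      Finset.sum_congr rfl fun i hi => by rw [hupdate i hi]
    have htt : t * t = 1 := by rw [← abs_mul_abs_self, ht, one_mul]
    refine ⟨Function.update σ a t, fun i => ?_, ?_⟩
    · rcases eq_or_ne i a with rfl | hi
      · rwa [Function.update_self]
      · rw [Function.update_of_ne hi, hσ i]
    · rw [Finset.sum_insert ha, Finset.sum_insert ha, Finset.sum_insert ha,
        Function.update_self, hx, hy]
      simp only [map_add, LinearMap.add_apply, map_smul, LinearMap.smul_apply, smul_eq_mul]
      linear_combination hle + hcross + (-B (x a) (y a)) * htt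

theorem le_mul_of_forall_nat_mul_le_max (hp : 2 < p) {β b C R : ℝ} (hb : 0 ≤ b)
    (h : ∀ M : ℕ, M * β ≤ C * (√M * max (R * (M : ℝ) ^ (1 / p)) (b * √M))) : β ≤ C * b := by
  have hexp : 0 < 1 / 2 - 1 / p := sub_pos.2 (one_div_lt_one_div_of_lt two_pos hp)
  have hlim : Filter.Tendsto (fun M : ℕ => C * max (R * (M : ℝ) ^ (-(1 / 2 - 1 / p))) b)
      Filter.atTop (nhds (C * b)) := by
    have h0 := ((tendsto_rpow_neg_atTop hexp).comp tendsto_natCast_atTop_atTop).const_mul R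
    simpa only [mul_zero, max_eq_right hb, Function.comp_def] using
      (h0.max (tendsto_const_nhds (x := b))).const_mul C
  refine ge_of_tendsto hlim ?_
  filter_upwards [Filter.eventually_gt_atTop 0] with M hM
  have hM' : (0 : ℝ) < M := Nat.cast_pos.2 hM
  have hpow : (M : ℝ) ^ (1 / p) = (M : ℝ) ^ (-(1 / 2 - 1 / p)) * √M := by
    rw [Real.sqrt_eq_rpow, ← Real.rpow_add hM']
    congr 1
    ring
  refine le_of_mul_le_mul_left ((h M).trans_eq ?_) hM'
  rw [hpow, ← mul_assoc R, ← max_mul_of_nonneg _ _ (Real.sqrt_nonneg _)]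
  linear_combination C * max (R * (M : ℝ) ^ (-(1 / 2 - 1 / p))) b * Real.mul_self_sqrt hM'.le

theorem max_le_sqrt_mul_max (hp : 0 < p) {R : ℝ} (hR : 0 ≤ R) (b : ℝ) (M : ℕ) :
    max (R * (M : ℝ) ^ (1 / p)) (b * √M) ≤ √M * max (max R b * (M : ℝ) ^ (1 / p)) 0 := by
  rcases Nat.eq_zero_or_pos M with rfl | hM
  · rw [Nat.cast_zero, Real.zero_rpow (one_div_pos.2 hp).ne']
    simp
  have hM1 : (1 : ℝ) ≤ M := Nat.one_le_cast.2 hM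
  have hroot : 1 ≤ (M : ℝ) ^ (1 / p) := Real.one_le_rpow hM1 (one_div_pos.2 hp).le
  have hsqrt : 1 ≤ √(M : ℝ) := Real.one_le_sqrt.2 hM1
  have : 0 ≤ max R b := hR.trans (le_max_left R b)
  refine le_trans (max_le ?_ ?_) (mul_le_mul_of_nonneg_left (le_max_left _ _) (by positivity))
  · calc R * (M : ℝ) ^ (1 / p) ≤ 1 * (max R b * (M : ℝ) ^ (1 / p)) := by
          rw [one_mul]
          gcongr
          exact le_max_left R b
      _ ≤ √M * (max R b * (M : ℝ) ^ (1 / p)) := by gcongr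
  · calc b * √M ≤ √M * (max R b * 1) := by
          rw [mul_one, mul_comm]
          gcongr
          exact le_max_right R b
      _ ≤ √M * (max R b * (M : ℝ) ^ (1 / p)) := by gcongr

theorem le_rpow_mul_of_le_mul_rpow (hp : 1 < p) {D a m : ℝ} (hD : 0 ≤ D) (ha : 0 ≤ a)
    (hm : 0 ≤ m) (h : D ≤ a * m ^ (1 - 1 / p) * D ^ (1 / p)) : D ≤ a ^ (p / (p - 1)) * m := by
  rcases hD.eq_or_lt with rfl | hD
  · positivity
  have hp0 : p ≠ 0 := by linarith
  have hp1 : p - 1 ≠ 0 := by linarith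
  have hle : D ^ (1 - 1 / p) ≤ a * m ^ (1 - 1 / p) := by
    refine le_of_mul_le_mul_right ?_ (Real.rpow_pos_of_pos hD (1 / p))
    rwa [← Real.rpow_add hD, sub_add_cancel, Real.rpow_one]
  have hexp : (1 - 1 / p) * (p / (p - 1)) = 1 := by field_simp
  have hpow : ∀ t : ℝ, 0 ≤ t → (t ^ (1 - 1 / p)) ^ (p / (p - 1)) = t := fun t ht => by
    rw [← Real.rpow_mul ht, hexp, Real.rpow_one]
  calc D = (D ^ (1 - 1 / p)) ^ (p / (p - 1)) := (hpow D hD.le).symm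
    _ ≤ (a * m ^ (1 - 1 / p)) ^ (p / (p - 1)) :=
        Real.rpow_le_rpow (by positivity) hle (div_nonneg (by linarith) (by linarith))
    _ = a ^ (p / (p - 1)) * m := by rw [Real.mul_rpow ha (by positivity), hpow m hm]

theorem le_sq_of_le_mul_sqrt {D a : ℝ} (hD : 0 ≤ D) (h : D ≤ a * √D) : D ≤ a ^ 2 := by
  have hsq : √D ^ 2 = D := Real.sq_sqrt hD
  nlinarith [Real.sqrt_nonneg D, sq_nonneg (a - √D)]

theorem le_max_mul_of_le_mul_max (hp : 1 < p) {D a s m : ℝ} (hD : 0 ≤ D) (ha : 0 ≤ a)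
    (hs : 0 ≤ s) (hm : 0 < m)
    (h : D ≤ a * m ^ (1 - 1 / p) * max (s * D ^ (1 / p)) (√D)) :
    D ≤ max ((a * s) ^ (p / (p - 1))) (a ^ 2 * m ^ ((p - 2) / p)) * m := by
  rw [max_mul_of_nonneg _ _ hm.le]
  rw [mul_max_of_nonneg _ _ (by positivity)] at h
  rcases le_max_iff.1 h with h | h
  · refine le_max_of_le_left (le_rpow_mul_of_le_mul_rpow hp hD (by positivity) hm.le ?_)
    linarith
  · refine le_max_of_le_right ((le_sq_of_le_mul_sqrt hD h).trans_eq ?_)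
    have hexp : (1 - 1 / p) * (2 : ℕ) = (p - 2) / p + 1 := by
      have : p ≠ 0 := by linarith
      push_cast
      field_simp
      ring
    rw [mul_pow, ← Real.rpow_mul_natCast hm.le, hexp, Real.rpow_add hm, Real.rpow_one, mul_assoc]

theorem sum_mul_sq_le_rpow_mul_rpow {ι : Type*} {w : ι → ℝ} (hp : 2 < p) (hw : ∀ i, 0 < w i)
    (s : Finset ι) (a : ι → ℝ) :
    ∑ i ∈ s, (w i * a i) ^ 2 ≤
      (∑ i ∈ s, |a i| ^ p) ^ (2 / p) * (∑ i ∈ s, w i ^ (2 * p / (p - 2))) ^ ((p - 2) / p) := by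
  have hconj : (p / 2).HolderConjugate (p / (p - 2)) := by
    refine Real.holderConjugate_iff.2 ⟨by linarith, ?_⟩
    have : p ≠ 0 := by linarith
    field_simp
    ring
  have holder := Real.inner_le_Lp_mul_Lq_of_nonneg s hconj (f := fun i => |a i| ^ 2)
    (g := fun i => w i ^ 2) (fun i _ => sq_nonneg _) (fun i _ => sq_nonneg _)
  have hexp : ((2 : ℕ) : ℝ) * (p / 2) = p ∧ ((2 : ℕ) : ℝ) * (p / (p - 2)) = 2 * p / (p - 2) := by
    constructor <;> · push_cast; ring
  simp only [one_div_div, ← Real.rpow_natCast_mul (abs_nonneg _),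
    ← Real.rpow_natCast_mul (hw _).le, hexp] at holder
  simpa only [sq_abs, mul_pow, mul_comm] using holder

theorem exists_subset_le_sum_le_two_mul {ι : Type*} {f : ι → ℝ} {a : ℝ} (ha : 0 ≤ a)
    (s : Finset ι) (hf : ∀ i ∈ s, f i ≤ a) (hs : a ≤ ∑ i ∈ s, f i) :
    ∃ t ⊆ s, a ≤ ∑ i ∈ t, f i ∧ ∑ i ∈ t, f i ≤ 2 * a := by
  classical
  induction s using Finset.induction_on with
  | empty => exact ⟨∅, subset_rfl, hs, by rw [Finset.sum_empty]; linarith⟩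
  | insert i s hi ih =>
    rcases le_or_gt a (∑ i ∈ s, f i) with h | h
    · obtain ⟨t, hts, ht⟩ := ih (fun j hj => hf j (Finset.mem_insert_of_mem hj)) h
      exact ⟨t, hts.trans (Finset.subset_insert i s), ht⟩
    · refine ⟨insert i s, subset_rfl, hs, ?_⟩
      rw [Finset.sum_insert hi]
      linarith [hf i (Finset.mem_insert_self i s)]

theorem exists_disjoint_le_sum_of_not_summable {ι : Type*} {f : ι → ℝ} {s : Set ι}
    (hf : ∀ i, 0 ≤ f i) (hs : ¬ Summable (s.indicator f)) (B : Finset ι) (a : ℝ) :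
    ∃ G : Finset ι, ↑G ⊆ s ∧ Disjoint B G ∧ a ≤ ∑ i ∈ G, f i := by
  classical
  by_contra! hsmall
  refine hs (summable_of_sum_le (c := ∑ i ∈ B, s.indicator f i + a)
    (Set.indicator_nonneg fun i _ => hf i) fun G => ?_)
  have hG : ∑ i ∈ (G \ B).filter (· ∈ s), f i < a := by
    refine hsmall _ (fun i hi => (Finset.mem_filter.1 hi).2) ?_
    exact Finset.disjoint_sdiff.mono_right (Finset.filter_subset _ _)
  calc ∑ i ∈ G, s.indicator f i ≤ ∑ i ∈ B ∪ G \ B, s.indicator f i :=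
        Finset.sum_le_sum_of_subset_of_nonneg
          (by rw [Finset.union_sdiff_self_eq_union]; exact Finset.subset_union_right)
          fun i _ _ => Set.indicator_nonneg (fun i _ => hf i) i
    _ = ∑ i ∈ B, s.indicator f i + ∑ i ∈ (G \ B).filter (· ∈ s), f i := by
        rw [Finset.sum_union Finset.disjoint_sdiff, Finset.sum_filter]
        rfl
    _ ≤ ∑ i ∈ B, s.indicator f i + a := by gcongr

theorem tendsto_rpow_nhdsGT_zero {a : ℝ} (ha : 0 < a) :
    Filter.Tendsto (fun t : ℝ => t ^ a) (nhdsWithin 0 (Set.Ioi 0)) (nhds 0) := by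
  have h := (Real.continuousAt_rpow_const 0 a (Or.inr ha.le)).tendsto
  rw [Real.zero_rpow ha.ne'] at h
  exact h.mono_left nhdsWithin_le_nhds

theorem sqrt_eq_rpow_mul_rpow (hp : p ≠ 0) {m : ℝ} (hm : 0 < m) :
    √m = m ^ (1 / p) * m ^ ((p - 2) / (2 * p)) := by
  rw [Real.sqrt_eq_rpow, ← Real.rpow_add hm]
  congr 1
  field_simp
  ring

theorem exists_disjoint_seq_of_forall_eventually {P : ℕ → Finset ℕ → Prop}
    (h : ∀ N, ∀ᶠ j in Filter.atTop, ∃ E : Finset ℕ, (∀ n ∈ E, N ≤ n) ∧ P j E) :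
    ∃ (φ : ℕ → ℕ) (E : ℕ → Finset ℕ), Function.Injective φ ∧
      (Pairwise fun i j => Disjoint (E i) (E j)) ∧ ∀ i, P (φ i) (E i) := by
  have : Std.Symm fun s t : ℕ × Finset ℕ => s.1 ≠ t.1 ∧ Disjoint s.2 t.2 :=
    ⟨fun _ _ hst => ⟨hst.1.symm, hst.2.symm⟩⟩
  obtain ⟨s, hP, hs⟩ := exists_seq_of_forall_finset_exists' (fun s : ℕ × Finset ℕ => P s.1 s.2)
    (fun s t => s.1 ≠ t.1 ∧ Disjoint s.2 t.2) fun G _ => by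
      obtain ⟨N, hN⟩ := (G.biUnion Prod.snd).exists_nat_subset_range
      obtain ⟨j, ⟨E, hE, hPE⟩, hj⟩ := ((h N).and
        (Filter.eventually_gt_atTop ((G.image Prod.fst).sup id))).exists
      refine ⟨(j, E), hPE, fun t ht => ⟨?_, Finset.disjoint_left.2 fun n hnt hnE => ?_⟩⟩
      · exact ((Finset.le_sup (f := id) (Finset.mem_image_of_mem _ ht)).trans_lt hj).ne
      · exact (hE n hnE).not_gt
          (Finset.mem_range.1 (hN (Finset.mem_biUnion.2 ⟨t, ht, hnt⟩)))
  exact ⟨fun i => (s i).1, fun i => (s i).2, fun i j hij => by_contra fun hne => (hs hne).1 hij,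
    fun i j hij => (hs hij).2, hP⟩

namespace Xpw

theorem pair_snd_apply (x : Xpw p w) (n : ℕ) :
    ((pair x).2 : ℕ → ℝ) n = w n * seq x n :=
  (show ↥(XpwMod p w) from x).2 n

theorem ext {x y : Xpw p w} (h : ∀ n, seq x n = seq y n) : x = y := by
  refine Subtype.ext (Prod.ext (lp.ext (funext h)) (lp.ext (funext fun n => ?_)))
  change ((pair x).2 : ℕ → ℝ) n = ((pair y).2 : ℕ → ℝ) n
  rw [pair_snd_apply, pair_snd_apply, h n]

theorem seq_restrict (E : Set ℕ) (x : Xpw p w) : seq (restrict E x) = E.indicator (seq x) := rfl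

/-- The `n`-th vector `e_n` of the natural basis. -/
def basisVec (n : ℕ) : Xpw p w :=
  show ↥(XpwMod p w) from
  ⟨(lp.single (ENNReal.ofReal p) n 1, lp.single 2 n (w n)), fun k => by
    change (Pi.single n (w n) : ℕ → ℝ) k = w k * (Pi.single n 1 : ℕ → ℝ) k
    rcases eq_or_ne k n with rfl | hk
    · rw [Pi.single_eq_same, Pi.single_eq_same, mul_one]
    · rw [Pi.single_eq_of_ne hk, Pi.single_eq_of_ne hk, mul_zero]⟩

theorem seq_basisVec (n : ℕ) : seq (basisVec n : Xpw p w) = Pi.single n 1 := rfl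

theorem nrm2_sq_hasSum (x : Xpw p w) : HasSum (fun n => (w n * seq x n) ^ 2) (nrm2 x ^ 2) := by
  have h := lp.hasSum_norm (p := 2) (by norm_num) (pair x).2
  simp only [ENNReal.toReal_ofNat, Real.rpow_two, Real.norm_eq_abs, sq_abs,
    pair_snd_apply] at h
  exact h

theorem nrm2_nonneg (x : Xpw p w) : 0 ≤ nrm2 x := norm_nonneg _

theorem nrm2_restrict_le (E : Set ℕ) (x : Xpw p w) : nrm2 (restrict E x) ≤ nrm2 x :=
  lp.norm_mono two_ne_zero fun n => norm_indicator_le_norm_self ((pair x).2 : ℕ → ℝ) n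

variable [Fact (1 ≤ ENNReal.ofReal p)]

theorem nrmP_nonneg (x : Xpw p w) : 0 ≤ nrmP x := norm_nonneg _

variable (p) in
theorem exponent_pos : 0 < p :=
  zero_lt_one.trans_le (ENNReal.one_le_ofReal.1 (Fact.out : 1 ≤ ENNReal.ofReal p))

theorem nrmP_restrict_le (E : Set ℕ) (x : Xpw p w) : nrmP (restrict E x) ≤ nrmP x :=
  lp.norm_mono (zero_lt_one.trans_le Fact.out).ne'
    fun n => norm_indicator_le_norm_self (seq x) n

theorem nrmP_rpow_hasSum (x : Xpw p w) : HasSum (fun n => |seq x n| ^ p) (nrmP x ^ p) := by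
  have hp : (ENNReal.ofReal p).toReal = p := ENNReal.toReal_ofReal (exponent_pos p).le
  have h := lp.hasSum_norm (by rw [hp]; exact exponent_pos p) (pair x).1
  rw [hp] at h
  exact h

theorem norm_eq_max (x : Xpw p w) : ‖x‖ = max (nrmP x) (nrm2 x) := rfl

theorem nrmP_le_norm (x : Xpw p w) : nrmP x ≤ ‖x‖ := le_max_left _ _

theorem nrm2_le_norm (x : Xpw p w) : nrm2 x ≤ ‖x‖ := le_max_right _ _

/-- The canonical map of `X_{p,w}` into `ℓ_p`. -/
def toSeqP : Xpw p w →L[ℝ] SeqP p :=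
  (ContinuousLinearMap.fst ℝ (SeqP p) Seq2).comp (XpwMod p w).subtypeL

/-- The map `a ↦ w · a` of `X_{p,w}` into `ℓ_2`, which carries `|·|_2` to the norm. -/
def toSeq2 : Xpw p w →L[ℝ] Seq2 :=
  (ContinuousLinearMap.snd ℝ (SeqP p) Seq2).comp (XpwMod p w).subtypeL

theorem norm_toSeq2_comp_le {G : Type*} [NormedAddCommGroup G] [NormedSpace ℝ G]
    (S : G →L[ℝ] Xpw p w) : ‖toSeq2.comp S‖ ≤ ‖S‖ :=
  ContinuousLinearMap.opNorm_le_bound _ (norm_nonneg S) fun z =>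
    (nrm2_le_norm (S z)).trans (S.le_opNorm z)

theorem nrmP_smul (c : ℝ) (x : Xpw p w) : nrmP (c • x) = |c| * nrmP x :=
  norm_smul c (toSeqP x)

theorem nrm2_smul (c : ℝ) (x : Xpw p w) : nrm2 (c • x) = |c| * nrm2 x :=
  norm_smul c (toSeq2 x)

/-- The `n`-th coordinate functional. -/
def coord (n : ℕ) : Xpw p w →L[ℝ] ℝ :=
  (lp.evalCLM ℝ (fun _ : ℕ => ℝ) (ENNReal.ofReal p) n).comp toSeqP

theorem seq_smul (c : ℝ) (x : Xpw p w) (n : ℕ) : seq (c • x) n = c * seq x n := rfl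

theorem seq_sum {ι : Type*} (s : Finset ι) (x : ι → Xpw p w) (n : ℕ) :
    seq (∑ i ∈ s, x i) n = ∑ i ∈ s, seq (x i) n :=
  map_sum (coord n) x s

theorem restrict_smul (E : Set ℕ) (c : ℝ) (x : Xpw p w) :
    restrict E (c • x) = c • restrict E x :=
  ext fun n => by
    rw [seq_smul, seq_restrict, seq_restrict]
    exact congrFun (Set.indicator_const_smul E c (seq x)) n

/-- The finitely supported vector `∑_{n ∈ F} a_n e_n`. -/
def finVec (F : Finset ℕ) (a : ℕ → ℝ) : Xpw p w := ∑ n ∈ F, a n • basisVec n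

theorem seq_finVec (F : Finset ℕ) (a : ℕ → ℝ) :
    seq (finVec F a : Xpw p w) = (F : Set ℕ).indicator a := by
  ext k
  simp only [finVec, seq_sum, seq_smul, seq_basisVec, Pi.single_apply, mul_ite, mul_one, mul_zero,
    Finset.sum_ite_eq, Set.indicator_apply, Finset.mem_coe]

theorem restrict_coe_finset (F : Finset ℕ) (x : Xpw p w) :
    restrict (F : Set ℕ) x = finVec F (seq x) :=
  ext fun n => by rw [seq_restrict, seq_finVec]

theorem nrmP_finVec_rpow (F : Finset ℕ) (a : ℕ → ℝ) :
    nrmP (finVec F a : Xpw p w) ^ p = ∑ n ∈ F, |a n| ^ p := by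
  refine (nrmP_rpow_hasSum _).unique ?_
  convert hasSum_sum_of_ne_finset_zero (L := .unconditional ℕ) (s := F) fun n hn => ?_ using 1
  · exact Finset.sum_congr rfl fun n hn => by
      rw [seq_finVec, Set.indicator_of_mem (Finset.mem_coe.2 hn)]
  · rw [seq_finVec, Set.indicator_of_notMem (Finset.mem_coe.not.2 hn), abs_zero,
      Real.zero_rpow (exponent_pos p).ne']

theorem nrm2_finVec_sq (F : Finset ℕ) (a : ℕ → ℝ) :
    nrm2 (finVec F a : Xpw p w) ^ 2 = ∑ n ∈ F, (w n * a n) ^ 2 := by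
  refine (nrm2_sq_hasSum _).unique ?_
  convert hasSum_sum_of_ne_finset_zero (L := .unconditional ℕ) (s := F) fun n hn => ?_ using 1
  · exact Finset.sum_congr rfl fun n hn => by
      rw [seq_finVec, Set.indicator_of_mem (Finset.mem_coe.2 hn)]
  · rw [seq_finVec, Set.indicator_of_notMem (Finset.mem_coe.not.2 hn), mul_zero,
      zero_pow two_ne_zero]

theorem hasSum_basisVec (x : Xpw p w) : HasSum (fun n => seq x n • basisVec n) x := by
  have hind : Topology.IsInducing ((XpwMod p w).subtypeL.toLinearMap.toAddMonoidHom) :=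
    Topology.IsInducing.subtypeVal
  refine (hind.hasSum_iff (L := .unconditional ℕ) _ _).1 ?_
  have h1 : HasSum (fun n => lp.single (ENNReal.ofReal p) n (seq x n)) (pair x).1 :=
    lp.hasSum_single ENNReal.ofReal_ne_top _
  have h2 : HasSum (fun n => lp.single 2 n (w n * seq x n)) (pair x).2 := by
    simpa only [pair_snd_apply] using lp.hasSum_single ENNReal.ofNat_ne_top (pair x).2
  convert h1.prodMk h2 using 1
  · funext n
    change (seq x n • (lp.single (ENNReal.ofReal p) n 1 : SeqP p),
      seq x n • (lp.single 2 n (w n) : Seq2)) = _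
    rw [← lp.single_smul, ← lp.single_smul, smul_eq_mul, smul_eq_mul, mul_one, mul_comm]
  · rfl

theorem tendsto_map_restrict_range (ψ : Xpw p w →L[ℝ] ℝ) (x : Xpw p w) :
    Filter.Tendsto (fun L : ℕ => ψ (restrict (Finset.range L : Set ℕ) x)) Filter.atTop
      (nhds (ψ x)) := by
  simp only [restrict_coe_finset]
  exact (ψ.continuous.tendsto x).comp (hasSum_basisVec x).tendsto_sum_nat

end Xpw

namespace Xpw

/-- A bounded sequence of disjointly supported vectors; `R` bounds `|·|_p` and `b` bounds
`|·|_2`. -/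
structure IsDisjointSeq (y : ℕ → Xpw p w) (R b : ℝ) : Prop where
  disjoint : Pairwise fun i j => Disjoint (Function.support (seq (y i)))
    (Function.support (seq (y j)))
  nrmP_le : ∀ j, nrmP (y j) ≤ R
  nrm2_le : ∀ j, nrm2 (y j) ≤ b

theorem IsDisjointSeq.comp_injective {y : ℕ → Xpw p w} {R b : ℝ} (hy : IsDisjointSeq y R b)
    {φ : ℕ → ℕ} (hφ : Function.Injective φ) : IsDisjointSeq (y ∘ φ) R b where
  disjoint _ _ hij := hy.disjoint (hφ.ne hij)
  nrmP_le j := hy.nrmP_le (φ j)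
  nrm2_le j := hy.nrm2_le (φ j)

theorem IsDisjointSeq.le_nrm2 {y : ℕ → Xpw p w} {R b : ℝ} (hy : IsDisjointSeq y R b) : 0 ≤ b :=
  (nrm2_nonneg _).trans (hy.nrm2_le 0)

theorem support_coord_subsingleton {y : ℕ → Xpw p w}
    (hy : Pairwise fun i j => Disjoint (Function.support (seq (y i)))
      (Function.support (seq (y j)))) (n : ℕ) :
    (Function.support fun j => seq (y j) n).Subsingleton := fun _ hi _ hj =>
  by_contra fun hij => Set.disjoint_left.1 (hy hij) hi hj

variable [Fact (1 ≤ ENNReal.ofReal p)]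

theorem nrmP_sum_rpow {y : ℕ → Xpw p w}
    (hy : Pairwise fun i j => Disjoint (Function.support (seq (y i)))
      (Function.support (seq (y j)))) (J : Finset ℕ) :
    nrmP (∑ j ∈ J, y j) ^ p = ∑ j ∈ J, nrmP (y j) ^ p := by
  refine (nrmP_rpow_hasSum _).unique ?_
  convert hasSum_sum fun j _ => nrmP_rpow_hasSum (y j) using 1
  funext n
  rw [seq_sum]
  exact map_sum_of_subsingleton_support (f := fun t : ℝ => |t| ^ p)
    (by rw [abs_zero, Real.zero_rpow (exponent_pos p).ne']) (support_coord_subsingleton hy n)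

theorem nrm2_sum_sq {y : ℕ → Xpw p w}
    (hy : Pairwise fun i j => Disjoint (Function.support (seq (y i)))
      (Function.support (seq (y j)))) (J : Finset ℕ) :
    nrm2 (∑ j ∈ J, y j) ^ 2 = ∑ j ∈ J, nrm2 (y j) ^ 2 := by
  refine (nrm2_sq_hasSum _).unique ?_
  convert hasSum_sum fun j _ => nrm2_sq_hasSum (y j) using 1
  funext n
  rw [seq_sum]
  exact map_sum_of_subsingleton_support (f := fun t : ℝ => (w n * t) ^ 2)
    (by rw [mul_zero, zero_pow two_ne_zero]) (support_coord_subsingleton hy n)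

namespace IsDisjointSeq

variable {y : ℕ → Xpw p w} {R b : ℝ}

theorem smul (hy : IsDisjointSeq y R b) {σ : ℕ → ℝ} (hσ : ∀ j, |σ j| ≤ 1) :
    IsDisjointSeq (fun j => σ j • y j) R b where
  disjoint i j hij := (hy.disjoint hij).mono (Function.support_const_smul_subset (σ i) (seq (y i)))
    (Function.support_const_smul_subset (σ j) (seq (y j)))
  nrmP_le j := by
    rw [nrmP_smul]
    exact (mul_le_of_le_one_left (nrmP_nonneg _) (hσ j)).trans (hy.nrmP_le j)
  nrm2_le j := by
    rw [nrm2_smul]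
    exact (mul_le_of_le_one_left (nrm2_nonneg _) (hσ j)).trans (hy.nrm2_le j)

theorem le_nrmP (hy : IsDisjointSeq y R b) : 0 ≤ R := (nrmP_nonneg _).trans (hy.nrmP_le 0)

theorem nrmP_sum_le (hy : IsDisjointSeq y R b) (M : ℕ) :
    nrmP (∑ j ∈ Finset.range M, y j) ≤ R * (M : ℝ) ^ (1 / p) := by
  have hp := exponent_pos p
  have hR := hy.le_nrmP
  refine (Real.rpow_le_rpow_iff (nrmP_nonneg _) (by positivity) hp).1 ?_
  rw [nrmP_sum_rpow hy.disjoint, Real.mul_rpow hR (by positivity), ← Real.rpow_mul (by positivity),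
    one_div_mul_cancel hp.ne', Real.rpow_one]
  refine (Finset.sum_le_card_nsmul _ _ (R ^ p) fun j _ =>
    Real.rpow_le_rpow (nrmP_nonneg _) (hy.nrmP_le j) hp.le).trans_eq ?_
  rw [Finset.card_range, nsmul_eq_mul, mul_comm]

theorem nrm2_sum_le (hy : IsDisjointSeq y R b) (M : ℕ) :
    nrm2 (∑ j ∈ Finset.range M, y j) ≤ b * √M := by
  refine abs_le_of_sq_le_sq' ?_ (mul_nonneg hy.le_nrm2 (Real.sqrt_nonneg _)) |>.2
  rw [nrm2_sum_sq hy.disjoint, mul_pow, Real.sq_sqrt (Nat.cast_nonneg M)]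
  refine (Finset.sum_le_card_nsmul _ _ (b ^ 2) fun j _ =>
    pow_le_pow_left₀ (nrm2_nonneg _) (hy.nrm2_le j) 2).trans_eq ?_
  rw [Finset.card_range, nsmul_eq_mul, mul_comm]

theorem norm_sum_le (hy : IsDisjointSeq y R b) (M : ℕ) :
    ‖∑ j ∈ Finset.range M, y j‖ ≤ max (R * (M : ℝ) ^ (1 / p)) (b * √M) :=
  max_le_max (hy.nrmP_sum_le M) (hy.nrm2_sum_le M)

theorem nonpos_of_forall_le_abs (hp : 2 < p) (hy : IsDisjointSeq y R b) (g : Xpw p w →L[ℝ] ℝ)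
    {β : ℝ} (hg : ∀ j, β ≤ |g (y j)|) : β ≤ 0 := by
  set σ : ℕ → ℝ := fun j => SignType.sign (g (y j))
  have hσ : ∀ j, |σ j| ≤ 1 := fun j => by
    rcases lt_trichotomy (g (y j)) 0 with h | h | h <;> simp [σ, h]
  rw [← mul_zero ‖g‖]
  refine le_mul_of_forall_nat_mul_le_max hp (R := max R b) le_rfl fun M => ?_
  calc M * β ≤ ∑ j ∈ Finset.range M, |g (y j)| := by
        simpa using Finset.card_nsmul_le_sum (Finset.range M) _ β fun j _ => hg j
    _ = g (∑ j ∈ Finset.range M, σ j • y j) := by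
        simp only [map_sum, map_smul, smul_eq_mul, σ, sign_mul_self]
    _ ≤ ‖g‖ * ‖∑ j ∈ Finset.range M, σ j • y j‖ := (le_abs_self _).trans (g.le_opNorm _)
    _ ≤ ‖g‖ * (√M * max (max R b * (M : ℝ) ^ (1 / p)) (0 * √M)) := by
        gcongr
        refine ((hy.smul hσ).norm_sum_le M).trans ?_
        rw [zero_mul]
        exact max_le_sqrt_mul_max (exponent_pos p) hy.le_nrmP b M

theorem tendsto_map_zero (hp : 2 < p) (hy : IsDisjointSeq y R b) (g : Xpw p w →L[ℝ] ℝ) :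
    Filter.Tendsto (fun j => g (y j)) Filter.atTop (nhds 0) := by
  refine Metric.tendsto_nhds.2 fun ε hε => ?_
  by_contra hnot
  obtain ⟨φ, hφ, hlarge⟩ := Filter.extraction_of_frequently_atTop (Filter.not_eventually.1 hnot)
  refine hε.not_ge ((hy.comp_injective hφ.injective).nonpos_of_forall_le_abs hp g fun j => ?_)
  have hj := hlarge j
  rwa [Real.dist_0_eq_abs, not_lt] at hj

theorem eventually_norm_map_lt {H : Type*} [NormedAddCommGroup H] [InnerProductSpace ℝ H]
    (hp : 2 < p) (hy : IsDisjointSeq y R b) (T : Xpw p w →L[ℝ] H) {β : ℝ} (hβ : ‖T‖ * b < β) :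
    ∀ᶠ j in Filter.atTop, ‖T (y j)‖ < β := by
  by_contra hnot
  obtain ⟨φ, hφ, hlarge⟩ := Filter.extraction_of_frequently_atTop
    (Filter.not_eventually.1 hnot |>.mono fun j hj => not_lt.1 hj)
  have hz := hy.comp_injective hφ.injective
  have hβ0 : 0 ≤ β := (mul_nonneg (norm_nonneg T) hy.le_nrm2).trans hβ.le
  refine hβ.not_ge (le_mul_of_forall_nat_mul_le_max hp hy.le_nrm2 (R := R) fun M => ?_)
  obtain ⟨σ, hσ, hsum⟩ := exists_abs_eq_one_sum_bilin_le
    ((innerₗ H).compl₁₂ T.toLinearMap T.toLinearMap) (y ∘ φ) (y ∘ φ) (Finset.range M)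
  set z := ∑ j ∈ Finset.range M, σ j • (y ∘ φ) j
  have hsq : M * β ^ 2 ≤ ‖T z‖ ^ 2 := by
    rw [← real_inner_self_eq_norm_sq]
    refine le_trans ?_ hsum
    have hterm : ∀ j ∈ Finset.range M, β ^ 2 ≤ inner ℝ (T ((y ∘ φ) j)) (T ((y ∘ φ) j)) :=
      fun j _ => by
        rw [real_inner_self_eq_norm_sq]
        exact pow_le_pow_left₀ hβ0 (hlarge j) 2
    have hcard := Finset.card_nsmul_le_sum _ _ _ hterm
    rwa [Finset.card_range, nsmul_eq_mul] at hcard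
  have hroot : √M * β ≤ ‖T z‖ := by
    refine abs_le_of_sq_le_sq' ?_ (norm_nonneg _) |>.2
    rwa [mul_pow, Real.sq_sqrt (Nat.cast_nonneg M)]
  calc M * β = √M * (√M * β) := by rw [← mul_assoc, Real.mul_self_sqrt (Nat.cast_nonneg M)]
    _ ≤ √M * (‖T‖ * max (R * (M : ℝ) ^ (1 / p)) (b * √M)) :=
        mul_le_mul_of_nonneg_left
          (hroot.trans (T.le_opNorm_of_le ((hz.smul fun j => (hσ j).le).norm_sum_le M)))
          (Real.sqrt_nonneg _)
    _ = ‖T‖ * (√M * max (R * (M : ℝ) ^ (1 / p)) (b * √M)) := by ring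

theorem le_of_forall_le_inner {v : ℕ → ℝ} {f : ℕ → Xpw p v} {r a β : ℝ} (hp : 2 < p)
    (hy : IsDisjointSeq y R b) (hf : IsDisjointSeq f r a) (U : Xpw p w →L[ℝ] Seq2)
    (h : ∀ j, β ≤ inner ℝ (toSeq2 (f j)) (U (y j))) : β ≤ a * ‖U‖ * b := by
  refine le_mul_of_forall_nat_mul_le_max hp hy.le_nrm2 (R := R) fun M => ?_
  obtain ⟨σ, hσ, hsum⟩ := exists_abs_eq_one_sum_bilin_le
    ((innerₗ Seq2).compl₁₂ (toSeq2 (p := p) (w := v)).toLinearMap U.toLinearMap) f y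
    (Finset.range M)
  have hσ' : ∀ j, |σ j| ≤ 1 := fun j => (hσ j).le
  have hf_sum : ‖toSeq2 (∑ j ∈ Finset.range M, σ j • f j)‖ ≤ a * √M :=
    (hf.smul hσ').nrm2_sum_le M
  have hy_sum := U.le_opNorm_of_le ((hy.smul hσ').norm_sum_le M)
  calc M * β ≤ ∑ j ∈ Finset.range M, inner ℝ (toSeq2 (f j)) (U (y j)) := by
        simpa only [Finset.card_range, nsmul_eq_mul] using
          Finset.card_nsmul_le_sum (Finset.range M) _ β fun j _ => h j
    _ ≤ inner ℝ (toSeq2 (∑ j ∈ Finset.range M, σ j • f j))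
          (U (∑ j ∈ Finset.range M, σ j • y j)) := hsum
    _ ≤ a * √M * (‖U‖ * max (R * (M : ℝ) ^ (1 / p)) (b * √M)) :=
        (real_inner_le_norm _ _).trans
          (mul_le_mul hf_sum hy_sum (norm_nonneg _) (mul_nonneg hf.le_nrm2 (Real.sqrt_nonneg _)))
    _ = a * ‖U‖ * (√M * max (R * (M : ℝ) ^ (1 / p)) (b * √M)) := by ring

end IsDisjointSeq

end Xpw

theorem omegaE_coe_finset (F : Finset ℕ) :
    omegaE p w F = ∑ n ∈ F, w n ^ (2 * p / (p - 2)) :=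
  Finset.tsum_subtype' F fun n => w n ^ (2 * p / (p - 2))

theorem omegaE_coe_finset_nonneg (hw : ∀ n, 0 < w n) (F : Finset ℕ) : 0 ≤ omegaE p w F := by
  rw [omegaE_coe_finset]
  exact Finset.sum_nonneg fun n _ => (Real.rpow_pos_of_pos (hw n) _).le

/-- The height on the atom `n` of an indicator function, when `X_{p,w}` is regarded as
`L_p(μ) ∩ L_2(μ)` for the measure `μ = ω`; it is the solution `b` of
`b ^ p = (w_n * b) ^ 2 = μ({n})`. -/
def atomHeight (p : ℝ) (w : ℕ → ℝ) (n : ℕ) : ℝ := w n ^ (2 / (p - 2))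

theorem atomHeight_pos {n : ℕ} (hn : 0 < w n) : 0 < atomHeight p w n := Real.rpow_pos_of_pos hn _

theorem atomHeight_rpow {n : ℕ} (hn : 0 < w n) :
    atomHeight p w n ^ p = w n ^ (2 * p / (p - 2)) := by
  rw [atomHeight, ← Real.rpow_mul hn.le, div_mul_eq_mul_div]

theorem atomHeight_rpow_sub_two (hp : 2 < p) {n : ℕ} (hn : 0 < w n) :
    atomHeight p w n ^ (p - 2) = w n ^ 2 := by
  rw [atomHeight, ← Real.rpow_mul hn.le, div_mul_cancel₀ _ (sub_pos.2 hp).ne', Real.rpow_two]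

theorem mul_atomHeight_sq (hp : 2 < p) {n : ℕ} (hn : 0 < w n) :
    (w n * atomHeight p w n) ^ 2 = w n ^ (2 * p / (p - 2)) := by
  rw [mul_pow, ← atomHeight_rpow_sub_two hp hn, ← Real.rpow_two (atomHeight p w n),
    ← Real.rpow_add (atomHeight_pos hn), sub_add_cancel, atomHeight_rpow hn]

namespace Xpw

variable [Fact (1 ≤ ENNReal.ofReal p)]

/-- The indicator function of `F`, when `X_{p,w}` is regarded as `L_p(ω) ∩ L_2(ω)`. -/
def indicatorVec (F : Finset ℕ) : Xpw p w := finVec F (atomHeight p w)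

theorem nrmP_indicatorVec (hw : ∀ n, 0 < w n) (F : Finset ℕ) :
    nrmP (indicatorVec F : Xpw p w) = omegaE p w F ^ (1 / p) := by
  have hp := exponent_pos p
  rw [← Real.rpow_left_inj (nrmP_nonneg _)
      (Real.rpow_nonneg (omegaE_coe_finset_nonneg hw F) _) hp.ne',
    ← Real.rpow_mul (omegaE_coe_finset_nonneg hw F), one_div_mul_cancel hp.ne', Real.rpow_one,
    indicatorVec, nrmP_finVec_rpow, omegaE_coe_finset]
  exact Finset.sum_congr rfl fun n _ => by
    rw [abs_of_pos (atomHeight_pos (hw n)), atomHeight_rpow (hw n)]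

theorem nrm2_indicatorVec_sq (hp : 2 < p) (hw : ∀ n, 0 < w n) (F : Finset ℕ) :
    nrm2 (indicatorVec F : Xpw p w) ^ 2 = omegaE p w F := by
  rw [indicatorVec, nrm2_finVec_sq, omegaE_coe_finset]
  exact Finset.sum_congr rfl fun n _ => mul_atomHeight_sq hp (hw n)

theorem nrm2_indicatorVec (hp : 2 < p) (hw : ∀ n, 0 < w n) (F : Finset ℕ) :
    nrm2 (indicatorVec F : Xpw p w) = √(omegaE p w F) := by
  rw [← nrm2_indicatorVec_sq hp hw, Real.sqrt_sq (nrm2_nonneg _)]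

theorem nrm2_finVec_le (hp : 2 < p) (hw : ∀ n, 0 < w n) (E : Finset ℕ) (a : ℕ → ℝ) :
    nrm2 (finVec E a : Xpw p w) ≤
      nrmP (finVec E a : Xpw p w) * omegaE p w E ^ ((p - 2) / (2 * p)) := by
  have hω := omegaE_coe_finset_nonneg (p := p) hw E
  refine abs_le_of_sq_le_sq' ?_ (mul_nonneg (nrmP_nonneg _) (Real.rpow_nonneg hω _)) |>.2
  rw [nrm2_finVec_sq]
  refine (sum_mul_sq_le_rpow_mul_rpow hp hw E a).trans_eq ?_
  rw [← nrmP_finVec_rpow (w := w), ← omegaE_coe_finset, mul_pow, ← Real.rpow_mul (nrmP_nonneg _),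
    ← Real.rpow_mul_natCast hω, ← Real.rpow_natCast (nrmP _)]
  congr 2 <;> · push_cast; field_simp

theorem nrm2_restrict_le_nrmP_mul (hp : 2 < p) (hw : ∀ n, 0 < w n) (E : Finset ℕ)
    (x : Xpw p w) :
    nrm2 (restrict (E : Set ℕ) x) ≤ nrmP x * omegaE p w E ^ ((p - 2) / (2 * p)) := by
  refine le_trans ?_ (mul_le_mul_of_nonneg_right (nrmP_restrict_le E x)
    (Real.rpow_nonneg (omegaE_coe_finset_nonneg hw E) _))
  rw [restrict_coe_finset]
  exact nrm2_finVec_le hp hw E _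

/-- The functional `⟨x, ·⟩` given by the pairing `⟨x, y⟩ = ∑_n x_n y_n w_n²`. -/
def pairing (x : Xpw p w) : Xpw p w →L[ℝ] ℝ := (innerSL ℝ (toSeq2 x)).comp toSeq2

theorem abs_pairing_le (x y : Xpw p w) : |pairing x y| ≤ nrm2 x * nrm2 y :=
  abs_real_inner_le_norm (toSeq2 x) (toSeq2 y)

theorem pairing_eq_tsum (x y : Xpw p w) :
    pairing x y = ∑' n, w n * seq y n * (w n * seq x n) := by
  change inner ℝ (pair x).2 (pair y).2 = _
  simp only [lp.inner_eq_tsum, pair_snd_apply, RCLike.inner_apply, conj_trivial]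

theorem pairing_self (x : Xpw p w) : pairing x x = nrm2 x ^ 2 :=
  real_inner_self_eq_norm_sq (toSeq2 x)

theorem pairing_restrict {x : Xpw p w} {E : Set ℕ} (hE : Function.support (seq x) ⊆ E)
    (y : Xpw p w) : pairing x (restrict E y) = pairing x y := by
  simp only [pairing_eq_tsum]
  refine tsum_congr fun n => ?_
  by_cases hn : n ∈ E
  · rw [seq_restrict, Set.indicator_of_mem hn]
  · rw [Function.notMem_support.1 fun h => hn (hE h)]
    ring

theorem support_indicatorVec_subset (F : Finset ℕ) :
    Function.support (seq (indicatorVec F : Xpw p w)) ⊆ F := by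
  rw [indicatorVec, seq_finVec]
  exact Set.support_indicator_subset

theorem norm_pairing_indicatorVec_le (hp : 2 < p) (hw : ∀ n, 0 < w n) (F : Finset ℕ) :
    ‖pairing (indicatorVec F : Xpw p w)‖ ≤ omegaE p w F ^ (1 - 1 / p) := by
  have hω := omegaE_coe_finset_nonneg (p := p) hw F
  refine ContinuousLinearMap.opNorm_le_bound _ (Real.rpow_nonneg hω _) fun y => ?_
  rw [← pairing_restrict (support_indicatorVec_subset F)]
  calc ‖pairing (indicatorVec F) (restrict (F : Set ℕ) y)‖
      ≤ nrm2 (indicatorVec F : Xpw p w) * nrm2 (restrict (F : Set ℕ) y) :=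
        abs_pairing_le _ _
    _ ≤ omegaE p w F ^ (1 / 2 : ℝ) * (‖y‖ * omegaE p w F ^ ((p - 2) / (2 * p))) := by
        rw [nrm2_indicatorVec hp hw, Real.sqrt_eq_rpow]
        gcongr
        exact (nrm2_restrict_le_nrmP_mul hp hw F y).trans
          (mul_le_mul_of_nonneg_right (nrmP_le_norm y) (Real.rpow_nonneg hω _))
    _ = omegaE p w F ^ (1 - 1 / p) * ‖y‖ := by
        have hexp : 1 - 1 / p = 1 / 2 + (p - 2) / (2 * p) := by
          field_simp
          ring
        rw [hexp, Real.rpow_add_of_nonneg hω (by norm_num)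
          (div_nonneg (by linarith) (by linarith))]
        ring

theorem map_finVec (ψ : Xpw p w →L[ℝ] ℝ) (F : Finset ℕ) (a : ℕ → ℝ) :
    ψ (finVec F a) = ∑ n ∈ F, a n * ψ (basisVec n) := by
  simp only [finVec, map_sum, map_smul, smul_eq_mul]

theorem norm_finVec_le_norm_finVec {F : Finset ℕ} {a b : ℕ → ℝ} (hab : ∀ n, |a n| ≤ |b n|) :
    ‖(finVec F a : Xpw p w)‖ ≤ ‖(finVec F b : Xpw p w)‖ := by
  rw [norm_eq_max, norm_eq_max]
  refine max_le_max ((Real.rpow_le_rpow_iff (nrmP_nonneg _) (nrmP_nonneg _) (exponent_pos p)).1 ?_)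
    (abs_le_of_sq_le_sq' ?_ (nrm2_nonneg _)).2
  · rw [nrmP_finVec_rpow, nrmP_finVec_rpow]
    exact Finset.sum_le_sum fun n _ =>
      Real.rpow_le_rpow (abs_nonneg _) (hab n) (exponent_pos p).le
  · rw [nrm2_finVec_sq, nrm2_finVec_sq]
    refine Finset.sum_le_sum fun n _ => ?_
    rw [mul_pow, mul_pow]
    exact mul_le_mul_of_nonneg_left (sq_le_sq.2 (hab n)) (sq_nonneg _)

-- Test `ψ` on the indicator of `E`, multiplied by the signs of the coefficients of `ψ`.
theorem mul_omegaE_le_of_le_abs (hp : 2 < p) (hw : ∀ n, 0 < w n) (ψ : Xpw p w →L[ℝ] ℝ)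
    {E : Finset ℕ} {τ : ℝ} (hE : ∀ n ∈ E, τ * (atomHeight p w n * w n ^ 2) ≤ |ψ (basisVec n)|) :
    τ * omegaE p w E ≤ ‖ψ‖ * max (omegaE p w E ^ (1 / p)) (√(omegaE p w E)) := by
  set a : ℕ → ℝ := fun n => atomHeight p w n * SignType.sign (ψ (basisVec n))
  have ha : ∀ n, |a n| ≤ |atomHeight p w n| := fun n => by
    rw [abs_mul]
    refine mul_le_of_le_one_right (abs_nonneg _) ?_
    rcases lt_trichotomy (ψ (basisVec n)) 0 with h | h | h <;> simp [h]
  calc τ * omegaE p w E = ∑ n ∈ E, τ * (w n * atomHeight p w n) ^ 2 := by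
        rw [omegaE_coe_finset, Finset.mul_sum]
        exact Finset.sum_congr rfl fun n _ => by rw [mul_atomHeight_sq hp (hw n)]
    _ ≤ ∑ n ∈ E, atomHeight p w n * |ψ (basisVec n)| := by
        refine Finset.sum_le_sum fun n hn => ?_
        have := mul_le_mul_of_nonneg_left (hE n hn) (atomHeight_pos (p := p) (hw n)).le
        linarith
    _ = ψ (finVec E a) := by
        rw [map_finVec]
        exact Finset.sum_congr rfl fun n _ => by rw [← sign_mul_self, mul_assoc]
    _ ≤ ‖ψ‖ * ‖(finVec E a : Xpw p w)‖ := (le_abs_self _).trans (ψ.le_opNorm _)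
    _ ≤ ‖ψ‖ * ‖(indicatorVec E : Xpw p w)‖ :=
        mul_le_mul_of_nonneg_left (norm_finVec_le_norm_finVec ha) (norm_nonneg ψ)
    _ = ‖ψ‖ * max (omegaE p w E ^ (1 / p)) (√(omegaE p w E)) := by
        rw [norm_eq_max, nrmP_indicatorVec hw, nrm2_indicatorVec hp hw]

/-- The vector supported on `G` that represents `ψ` there through the pairing `⟨·, ·⟩`. -/
def representer (ψ : Xpw p w →L[ℝ] ℝ) (G : Finset ℕ) : Xpw p w :=
  finVec G fun n => ψ (basisVec n) / w n ^ 2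

theorem pairing_representer (hw : ∀ n, 0 < w n) (ψ : Xpw p w →L[ℝ] ℝ) (G : Finset ℕ)
    (x : Xpw p w) : pairing (representer ψ G) x = ψ (restrict (G : Set ℕ) x) := by
  rw [pairing_eq_tsum, restrict_coe_finset, map_finVec, representer, seq_finVec,
    tsum_eq_sum (s := G) fun n hn => by
      rw [Set.indicator_of_notMem (Finset.mem_coe.not.2 hn)]
      ring]
  refine Finset.sum_congr rfl fun n hn => ?_
  have := (hw n).ne'
  rw [Set.indicator_of_mem (Finset.mem_coe.2 hn)]
  field_simp

theorem restrict_finVec (F : Finset ℕ) (a : ℕ → ℝ) :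
    restrict (F : Set ℕ) (finVec F a : Xpw p w) = finVec F a :=
  ext fun n => by rw [seq_restrict, seq_finVec, Set.indicator_indicator, Set.inter_self]

theorem nrm2_representer_sq (hw : ∀ n, 0 < w n) (ψ : Xpw p w →L[ℝ] ℝ) (G : Finset ℕ) :
    nrm2 (representer ψ G) ^ 2 = ψ (representer ψ G) := by
  rw [← pairing_self, pairing_representer hw]
  exact congrArg ψ (restrict_finVec G _)

theorem nrmP_representer_rpow_le (hp : 2 < p) (hw : ∀ n, 0 < w n) (ψ : Xpw p w →L[ℝ] ℝ)
    {G : Finset ℕ} {τ : ℝ} (hτ : 0 ≤ τ)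
    (hG : ∀ n ∈ G, |ψ (basisVec n)| ≤ τ * (atomHeight p w n * w n ^ 2)) :
    nrmP (representer ψ G) ^ p ≤ τ ^ (p - 2) * nrm2 (representer ψ G) ^ 2 := by
  rw [representer, nrmP_finVec_rpow, nrm2_finVec_sq, Finset.mul_sum]
  refine Finset.sum_le_sum fun n hn => ?_
  set t := ψ (basisVec n) / w n ^ 2
  have ht : |t| ≤ τ * atomHeight p w n := by
    rw [abs_div, abs_of_pos (pow_pos (hw n) 2), div_le_iff₀ (pow_pos (hw n) 2), mul_assoc]
    exact hG n hn
  calc |t| ^ p = |t| ^ (p - 2) * |t| ^ 2 := by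
        rw [← Real.rpow_add_natCast' (abs_nonneg t) (by push_cast; linarith)]
        congr 1
        push_cast
        ring
    _ ≤ (τ * atomHeight p w n) ^ (p - 2) * |t| ^ 2 := by
        gcongr
    _ = τ ^ (p - 2) * (w n * t) ^ 2 := by
        rw [Real.mul_rpow hτ (atomHeight_pos (hw n)).le, atomHeight_rpow_sub_two hp (hw n), sq_abs]
        ring

theorem nrm2_representer_sq_le (hp : 2 < p) (hw : ∀ n, 0 < w n) (ψ : Xpw p w →L[ℝ] ℝ)
    {G : Finset ℕ} {τ : ℝ} (hτ : 0 ≤ τ)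
    (hG : ∀ n ∈ G, |ψ (basisVec n)| ≤ τ * (atomHeight p w n * w n ^ 2)) :
    nrm2 (representer ψ G) ^ 2 ≤ ‖ψ‖ * max (τ ^ ((p - 2) / p) *
      (nrm2 (representer ψ G) ^ 2) ^ (1 / p)) (√(nrm2 (representer ψ G) ^ 2)) := by
  have hp0 : 0 < p := by linarith
  have hP : nrmP (representer ψ G) ≤
      τ ^ ((p - 2) / p) * (nrm2 (representer ψ G) ^ 2) ^ (1 / p) := by
    rw [div_eq_mul_one_div, Real.rpow_mul hτ, ← Real.mul_rpow (by positivity) (by positivity),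
      one_div, Real.le_rpow_inv_iff_of_pos (nrmP_nonneg _) (by positivity) hp0]
    exact nrmP_representer_rpow_le hp hw ψ hτ hG
  rw [Real.sqrt_sq (nrm2_nonneg _)]
  nth_rw 1 [nrm2_representer_sq hw]
  exact (le_abs_self _).trans (ψ.le_opNorm_of_le (max_le_max hP le_rfl))

theorem exists_subset_omegaE_le_abs_sub_le (hp : 2 < p) (hw : ∀ n, 0 < w n)
    {ψ : Xpw p w →L[ℝ] ℝ} {K m τ : ℝ} (hK : 0 ≤ K) (hm : 0 < m) (hτ : 0 < τ)
    (hψ : ‖ψ‖ ≤ K * m ^ (1 - 1 / p)) (I : Finset ℕ) :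
    ∃ E ⊆ I,
      omegaE p w E ≤ max ((K / τ) ^ (p / (p - 1))) ((K / τ) ^ 2 * m ^ ((p - 2) / p)) * m ∧
      ∀ x : Xpw p w, |ψ (restrict (I : Set ℕ) x) - ψ (restrict (E : Set ℕ) x)| ≤
        √(max ((K * τ ^ ((p - 2) / p)) ^ (p / (p - 1))) (K ^ 2 * m ^ ((p - 2) / p)) * m) *
          nrm2 x := by
  classical
  set dense : ℕ → Prop := fun n => τ * (atomHeight p w n * w n ^ 2) ≤ |ψ (basisVec n)|
  set E := I.filter dense
  set G := I.filter fun n => ¬ dense n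
  have hp1 : 1 < p := by linarith
  refine ⟨E, Finset.filter_subset _ _, ?_, fun x => ?_⟩
  · have hE := mul_omegaE_le_of_le_abs hp hw ψ (E := E) fun n hn => (Finset.mem_filter.1 hn).2
    have hle : omegaE p w E ≤ K / τ * m ^ (1 - 1 / p) *
        max (1 * omegaE p w E ^ (1 / p)) (√(omegaE p w E)) := by
      rw [one_mul, div_mul_eq_mul_div, div_mul_eq_mul_div, le_div_iff₀' hτ]
      exact hE.trans (mul_le_mul_of_nonneg_right hψ (le_max_of_le_right (Real.sqrt_nonneg _)))
    have hmass := le_max_mul_of_le_mul_max hp1 (omegaE_coe_finset_nonneg hw E)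
      (div_nonneg hK hτ.le) zero_le_one hm hle
    rwa [mul_one] at hmass
  · have hG := nrm2_representer_sq_le hp hw ψ (G := G) hτ.le
      fun n hn => (not_le.1 (Finset.mem_filter.1 hn).2).le
    have hrep := le_max_mul_of_le_mul_max hp1 (sq_nonneg _) hK (Real.rpow_nonneg hτ.le _) hm
      (hG.trans (mul_le_mul_of_nonneg_right hψ (le_max_of_le_right (Real.sqrt_nonneg _))))
    have hsplit : ψ (restrict (I : Set ℕ) x) - ψ (restrict (E : Set ℕ) x) =
        pairing (representer ψ G) x := by
      rw [pairing_representer hw, sub_eq_iff_eq_add']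
      simp only [restrict_coe_finset, map_finVec]
      exact (Finset.sum_filter_add_sum_filter_not I dense _).symm
    rw [hsplit]
    exact (abs_pairing_le _ x).trans
      (mul_le_mul_of_nonneg_right (Real.le_sqrt_of_sq_le hrep) (nrm2_nonneg x))

end Xpw

theorem IsXpWeight.not_summable_indicator (hp : 2 < p) (hw : IsXpWeight p w) {a : ℝ}
    (ha : 0 < a) :
    ¬ Summable ({n | w n ^ (2 * p / (p - 2)) < a}.indicator fun n => w n ^ (2 * p / (p - 2))) := by
  intro hsum
  have hq : 0 < 2 * p / (p - 2) := div_pos (by linarith) (by linarith)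
  have hset : {n | w n ^ (2 * p / (p - 2)) < a} = {n | w n < a ^ (2 * p / (p - 2))⁻¹} := by
    ext n
    exact Real.lt_rpow_inv_iff_of_pos (hw.1 n).le ha.le hq |>.symm
  rw [hset] at hsum
  exact (summable_subtype_iff_indicator.2 hsum).tsum_ofReal_ne_top
    (hw.2 _ (Real.rpow_pos_of_pos ha _))

theorem IsXpWeight.exists_disjoint_omegaE (hp : 2 < p) (hw : IsXpWeight p w) {m : ℝ}
    (hm : 0 < m) (B : Finset ℕ) :
    ∃ F : Finset ℕ, Disjoint B F ∧ m / 2 ≤ omegaE p w F ∧ omegaE p w F ≤ m := by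
  obtain ⟨G, hGsmall, hBG, hG⟩ := exists_disjoint_le_sum_of_not_summable
    (fun n => (Real.rpow_pos_of_pos (hw.1 n) _).le)
    (hw.not_summable_indicator hp (half_pos hm)) B (m / 2)
  obtain ⟨F, hFG, hlow, hup⟩ := exists_subset_le_sum_le_two_mul (half_pos hm).le G
    (fun n hn => (hGsmall hn).le) hG
  rw [← omegaE_coe_finset] at hlow hup
  exact ⟨F, hBG.mono_right hFG, hlow, by linarith⟩

/-- Disjoint finite blocks of `ω`-measure about `m`. -/
structure IsBlockSeq (p : ℝ) (w : ℕ → ℝ) (m : ℝ) (F : ℕ → Finset ℕ) : Prop where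
  disjoint : Pairwise fun i j => Disjoint (F i) (F j)
  le_omegaE : ∀ j, m / 2 ≤ omegaE p w (F j)
  omegaE_le : ∀ j, omegaE p w (F j) ≤ m

theorem IsXpWeight.exists_isBlockSeq (hp : 2 < p) (hw : IsXpWeight p w) {m : ℝ} (hm : 0 < m) :
    ∃ F, IsBlockSeq p w m F := by
  have : Std.Symm fun F G : Finset ℕ => Disjoint F G := ⟨fun _ _ h => h.symm⟩
  obtain ⟨F, hF, hdisj⟩ := exists_seq_of_forall_finset_exists'
    (fun F : Finset ℕ => m / 2 ≤ omegaE p w F ∧ omegaE p w F ≤ m) (fun F G => Disjoint F G)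
    fun s _ => by
      obtain ⟨G, hBG, hG⟩ := hw.exists_disjoint_omegaE hp hm (s.biUnion id)
      exact ⟨G, hG, fun F hF => (Finset.disjoint_biUnion_left _ _ _).1 hBG F hF⟩
  exact ⟨F, hdisj, fun j => (hF j).1, fun j => (hF j).2⟩

open Xpw in
theorem IsBlockSeq.isDisjointSeq [Fact (1 ≤ ENNReal.ofReal p)] (hp : 2 < p)
    (hw : ∀ n, 0 < w n) {m : ℝ} {F : ℕ → Finset ℕ} (hF : IsBlockSeq p w m F) :
    IsDisjointSeq (fun j => (indicatorVec (F j) : Xpw p w)) (m ^ (1 / p)) (√m) where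
  disjoint i j hij := (Finset.disjoint_coe.2 (hF.disjoint hij)).mono
    (support_indicatorVec_subset _) (support_indicatorVec_subset _)
  nrmP_le j := by
    rw [nrmP_indicatorVec hw]
    exact Real.rpow_le_rpow (omegaE_coe_finset_nonneg hw _) (hF.omegaE_le j)
      (by rw [one_div]; positivity)
  nrm2_le j := by
    rw [nrm2_indicatorVec hp hw]
    exact Real.sqrt_le_sqrt (hF.omegaE_le j)

/-- The mass `m` of the blocks and the density level `τ` are so small that, for a functional of
norm at most `K * m ^ (1 - 1 / p)`, the part of density below `τ` is negligible. -/
structure AdmissibleScale (p K τ m : ℝ) : Prop where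
  pos : 0 < m
  le_one : m ≤ 1
  small : max ((K * τ ^ ((p - 2) / p)) ^ (p / (p - 1))) (K ^ 2 * m ^ ((p - 2) / p)) ≤
    ((8 * K)⁻¹) ^ 2

theorem exists_eventually_admissibleScale (hp : 2 < p) {K : ℝ} (hK : 0 < K) :
    ∃ τ, 0 < τ ∧ ∀ᶠ m in nhdsWithin 0 (Set.Ioi 0), AdmissibleScale p K τ m := by
  have hr : 0 < (p - 2) / p := div_pos (by linarith) (by linarith)
  have hq : 0 < p / (p - 1) := div_pos (by linarith) (by linarith)
  have hθ : 0 < ((8 * K)⁻¹) ^ 2 := by positivity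
  have hτ_lim : Filter.Tendsto (fun τ : ℝ => (K * τ ^ ((p - 2) / p)) ^ (p / (p - 1)))
      (nhdsWithin 0 (Set.Ioi 0)) (nhds 0) := by
    have h := ((tendsto_rpow_nhdsGT_zero hr).const_mul K).rpow_const (Or.inr hq.le)
    rwa [mul_zero, Real.zero_rpow hq.ne'] at h
  have hm_lim : Filter.Tendsto (fun m : ℝ => K ^ 2 * m ^ ((p - 2) / p))
      (nhdsWithin 0 (Set.Ioi 0)) (nhds 0) := by
    simpa only [mul_zero] using (tendsto_rpow_nhdsGT_zero hr).const_mul (K ^ 2)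
  obtain ⟨τ, hτ_small, hτ⟩ :=
    ((hτ_lim.eventually_le_const hθ).and self_mem_nhdsWithin).exists
  refine ⟨τ, hτ, ?_⟩
  filter_upwards [hm_lim.eventually_le_const hθ, self_mem_nhdsWithin,
    nhdsWithin_le_nhds (Iic_mem_nhds zero_lt_one)] with m hm_small hm hm1
  exact ⟨hm, hm1, max_le hτ_small hm_small⟩

/-- The bound, relative to the mass of a block, for the measure of the set where a functional
has density at least `τ`. -/
def massConst (p K τ : ℝ) : ℝ := max ((K / τ) ^ (p / (p - 1))) ((K / τ) ^ 2)

theorem massConst_pos {K τ : ℝ} (hK : 0 < K) (hτ : 0 < τ) : 0 < massConst p K τ :=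
  lt_max_of_lt_right (pow_pos (div_pos hK hτ) 2)

namespace Xpw

variable [Fact (1 ≤ ENNReal.ofReal p)]

theorem exists_subset_le_map_restrict (hp : 2 < p) (hw : ∀ n, 0 < w n) {K τ m : ℝ} (hK : 0 < K)
    (hτ : 0 < τ) (hm : AdmissibleScale p K τ m) {ψ : Xpw p w →L[ℝ] ℝ}
    (hψ : ‖ψ‖ ≤ K * m ^ (1 - 1 / p)) {x : Xpw p w} (hx : nrm2 x ≤ K * √m) {I : Finset ℕ}
    (hI : m / 4 ≤ ψ (restrict (I : Set ℕ) x)) :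
    ∃ E ⊆ I, omegaE p w E ≤ massConst p K τ * m ∧ m / 8 ≤ ψ (restrict (E : Set ℕ) x) := by
  obtain ⟨E, hEI, hω, herr⟩ := exists_subset_omegaE_le_abs_sub_le hp hw hK.le hm.pos hτ hψ I
  refine ⟨E, hEI, hω.trans ?_, ?_⟩
  · have hpow : m ^ ((p - 2) / p) ≤ 1 :=
      Real.rpow_le_one hm.pos.le hm.le_one (div_nonneg (by linarith) (by linarith))
    refine mul_le_mul_of_nonneg_right (max_le_max le_rfl ?_) hm.pos.le
    exact mul_le_of_le_one_right (sq_nonneg _) hpow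
  · have hsmall := calc
      |ψ (restrict (I : Set ℕ) x) - ψ (restrict (E : Set ℕ) x)|
        ≤ √(((8 * K)⁻¹) ^ 2 * m) * (K * √m) := (herr x).trans (by
          gcongr
          · exact nrm2_nonneg x
          · exact hm.pos.le
          · exact hm.small)
      _ = (8 * K)⁻¹ * K * (√m * √m) := by
          rw [Real.sqrt_mul (sq_nonneg _), Real.sqrt_sq (by positivity)]
          ring
      _ = m / 8 := by
          rw [Real.mul_self_sqrt hm.pos.le]
          field_simp
    linarith [(abs_le.1 hsmall).2]

theorem exists_Ico_le_map_restrict {ψ : Xpw p w →L[ℝ] ℝ} {x : Xpw p w} {N : ℕ} {a b : ℝ}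
    (hx : a + b < ψ x) (hhead : ψ (restrict (Set.Iio N) x) ≤ b) :
    ∃ L, a ≤ ψ (restrict (Finset.Ico N L : Set ℕ) x) := by
  obtain ⟨L, hL, hNL⟩ := (((tendsto_map_restrict_range ψ x).eventually_const_lt hx).and
    (Filter.eventually_ge_atTop N)).exists
  refine ⟨L, ?_⟩
  rw [← Finset.coe_range, restrict_coe_finset, map_finVec] at hhead
  rw [restrict_coe_finset, map_finVec] at hL ⊢
  rw [Finset.sum_Ico_eq_sub _ hNL]
  linarith

theorem IsDisjointSeq.tendsto_norm_restrict_Iio (hp : 2 < p) {v : ℕ → ℝ} {f : ℕ → Xpw p v}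
    {R a : ℝ} (hf : IsDisjointSeq f R a) (T : Xpw p v →L[ℝ] Xpw p w) (N : ℕ) :
    Filter.Tendsto (fun j => ‖restrict (Set.Iio N) (T (f j))‖) Filter.atTop (nhds 0) := by
  simp only [← Finset.coe_range, restrict_coe_finset, finVec]
  have hcoord : ∀ n, Filter.Tendsto (fun j => seq (T (f j)) n) Filter.atTop (nhds 0) := fun n =>
    hf.tendsto_map_zero hp ((coord n).comp T)
  simpa using (tendsto_finsetSum (Finset.range N) fun n _ =>
    (hcoord n).smul_const (basisVec n : Xpw p w)).norm

theorem IsDisjointSeq.le_of_forall_eventually_exists_piece (hp : 2 < p) {v : ℕ → ℝ}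
    {f : ℕ → Xpw p v} {R a r β b : ℝ} (hf : IsDisjointSeq f R a) (S : Xpw p w →L[ℝ] Xpw p v)
    {x : ℕ → Xpw p w} (hx : ∀ j, nrmP (x j) ≤ r)
    (h : ∀ N, ∀ᶠ j in Filter.atTop, ∃ E : Finset ℕ, (∀ n ∈ E, N ≤ n) ∧
      β ≤ pairing (f j) (S (restrict E (x j))) ∧ nrm2 (restrict (E : Set ℕ) (x j)) ≤ b) :
    β ≤ a * ‖S‖ * b := by
  obtain ⟨φ, E, hφ, hE, hpiece⟩ := exists_disjoint_seq_of_forall_eventually h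
  have hsupp : ∀ i, Function.support (seq (restrict (E i : Set ℕ) (x (φ i)))) ⊆ E i := fun i => by
    rw [seq_restrict]
    exact Set.support_indicator_subset
  have hy : IsDisjointSeq (fun i => restrict (E i : Set ℕ) (x (φ i))) r b :=
    { disjoint := fun i j hij => (Finset.disjoint_coe.2 (hE hij)).mono (hsupp i) (hsupp j)
      nrmP_le := fun i => (nrmP_restrict_le _ _).trans (hx (φ i))
      nrm2_le := fun i => (hpiece i).2 }
  refine (hy.le_of_forall_le_inner hp (hf.comp_injective hφ) (toSeq2.comp S)
    fun i => (hpiece i).1).trans ?_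
  have ha := hf.le_nrm2
  have hb := hy.le_nrm2
  gcongr
  exact norm_toSeq2_comp_le S

end Xpw

namespace IsBlockSeq

open Xpw

variable [Fact (1 ≤ ENNReal.ofReal p)] {v : ℕ → ℝ} {m : ℝ} {F : ℕ → Finset ℕ}

theorem norm_indicatorVec_le (hp : 2 < p) (hv : ∀ n, 0 < v n) (hF : IsBlockSeq p v m F)
    (hm : 0 < m) (hm1 : m ≤ 1) (j : ℕ) : ‖(indicatorVec (F j) : Xpw p v)‖ ≤ m ^ (1 / p) := by
  refine max_le ((hF.isDisjointSeq hp hv).nrmP_le j)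
    (((hF.isDisjointSeq hp hv).nrm2_le j).trans ?_)
  rw [Real.sqrt_eq_rpow]
  exact Real.rpow_le_rpow_of_exponent_ge hm hm1 (one_div_le_one_div_of_le two_pos hp.le)

theorem le_norm_indicatorVec (hp : 2 < p) (hv : ∀ n, 0 < v n) (hF : IsBlockSeq p v m F)
    (hm : 0 < m) (j : ℕ) : m ^ (1 / p) / 2 ≤ ‖(indicatorVec (F j) : Xpw p v)‖ :=
  have : 0 < 1 / p := one_div_pos.2 (by linarith)
  calc m ^ (1 / p) / 2 = m ^ (1 / p) * (1 / 2) ^ (1 : ℝ) := by rw [Real.rpow_one]; ring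
    _ ≤ m ^ (1 / p) * (1 / 2) ^ (1 / p) := by
      gcongr ?_ * ?_
      exact Real.rpow_le_rpow_of_exponent_ge (by norm_num) (by norm_num)
        ((div_le_one (by linarith)).2 (by linarith))
    _ = (m / 2) ^ (1 / p) := by
      rw [← Real.mul_rpow hm.le (by norm_num), mul_one_div]
    _ ≤ omegaE p v (F j) ^ (1 / p) := by
      have := hF.le_omegaE j
      gcongr
    _ = nrmP (indicatorVec (F j) : Xpw p v) := (nrmP_indicatorVec hv _).symm
    _ ≤ ‖(indicatorVec (F j) : Xpw p v)‖ := nrmP_le_norm _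

variable {K τ : ℝ} {T : Xpw p v →L[ℝ] Xpw p w} {S : Xpw p w →L[ℝ] Xpw p v}

theorem eventually_nrm2_map_lt (hp : 2 < p) (hv : ∀ n, 0 < v n) (hF : IsBlockSeq p v m F)
    (hm : 0 < m) (hT : ‖T‖ < K) :
    ∀ᶠ j in Filter.atTop, nrm2 (T (indicatorVec (F j))) < K * √m :=
  (hF.isDisjointSeq hp hv).eventually_norm_map_lt hp (toSeq2.comp T)
    (mul_lt_mul_of_pos_right ((norm_toSeq2_comp_le T).trans_lt hT) (Real.sqrt_pos.2 hm))

theorem norm_pairing_comp_le (hp : 2 < p) (hv : ∀ n, 0 < v n) (hF : IsBlockSeq p v m F)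
    (hm : 0 ≤ m) (hS : ‖S‖ < K) (j : ℕ) :
    ‖(pairing (indicatorVec (F j))).comp S‖ ≤ K * m ^ (1 - 1 / p) := calc
  _ ≤ ‖pairing (indicatorVec (F j))‖ * ‖S‖ := ContinuousLinearMap.opNorm_comp_le _ _
  _ ≤ m ^ (1 - 1 / p) * K := by
    gcongr
    refine (norm_pairing_indicatorVec_le hp hv _).trans (Real.rpow_le_rpow
      (omegaE_coe_finset_nonneg hv _) (hF.omegaE_le j) ?_)
    exact sub_nonneg.2 ((div_le_one (by linarith)).2 (by linarith))
  _ = K * m ^ (1 - 1 / p) := mul_comm _ _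

theorem eventually_exists_le_pairing_restrict (hp : 2 < p) (hv : ∀ n, 0 < v n)
    (hw : ∀ n, 0 < w n) (hF : IsBlockSeq p v m F) (hm : AdmissibleScale p K τ m) (hτ : 0 < τ)
    (hST : Function.LeftInverse S T) (hT : ‖T‖ < K) (hS : ‖S‖ < K) (N : ℕ) :
    ∀ᶠ j in Filter.atTop, ∃ E : Finset ℕ, (∀ n ∈ E, N ≤ n) ∧
      omegaE p w E ≤ massConst p K τ * m ∧
      m / 8 ≤ pairing (indicatorVec (F j)) (S (restrict E (T (indicatorVec (F j))))) := by
  have hf := hF.isDisjointSeq hp hv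
  have hK : 0 < K := (norm_nonneg T).trans_lt hT
  have hm0 := hm.pos
  have hψ := hF.norm_pairing_comp_le hp hv hm0.le hS
  have hhead : ∀ᶠ j in Filter.atTop, K * m ^ (1 - 1 / p) *
      ‖restrict (Set.Iio N) (T (indicatorVec (F j)))‖ < m / 8 := by
    have h := (hf.tendsto_norm_restrict_Iio hp T N).const_mul (K * m ^ (1 - 1 / p))
    rw [mul_zero] at h
    exact h.eventually_lt_const (by positivity)
  filter_upwards [hhead, hF.eventually_nrm2_map_lt hp hv hm0 hT] with j hj_head hj_nrm2
  have hlarge : m / 4 + m / 8 < (pairing (indicatorVec (F j))).comp S (T (indicatorVec (F j))) := by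
    rw [ContinuousLinearMap.comp_apply, hST, pairing_self, nrm2_indicatorVec_sq hp hv]
    linarith [hF.le_omegaE j]
  obtain ⟨L, hL⟩ := exists_Ico_le_map_restrict hlarge
    ((le_abs_self _).trans ((ContinuousLinearMap.le_of_opNorm_le _ (hψ j) _).trans hj_head.le))
  obtain ⟨E, hEI, hω, hE⟩ := exists_subset_le_map_restrict hp hw hK hτ hm (hψ j) hj_nrm2.le hL
  exact ⟨E, fun n hn => (Finset.mem_Ico.1 (hEI hn)).1, hω, hE⟩

theorem exists_le_nrm2_restrict (hp : 2 < p) (hv : ∀ n, 0 < v n)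
    (hw : ∀ n, 0 < w n) (hF : IsBlockSeq p v m F) (hm : AdmissibleScale p K τ m) (hτ : 0 < τ)
    (hST : Function.LeftInverse S T) (hT : ‖T‖ < K) (hS : ‖S‖ < K) (N : ℕ) {t : ℝ} (ht : 0 < t) :
    ∃ j, ∃ E : Finset ℕ, (∀ n ∈ E, N ≤ n) ∧ nrm2 (T (indicatorVec (F j))) ≤ K * √m ∧
      ‖restrict (Set.Iio N) (T (indicatorVec (F j)))‖ < t ∧
      omegaE p w E ≤ massConst p K τ * m ∧
      √m / (8 * K) ≤ nrm2 (restrict (E : Set ℕ) (T (indicatorVec (F j)))) := by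
  by_contra! hnot
  have hf := hF.isDisjointSeq hp hv
  have hle : m / 8 ≤ √m * ‖S‖ * (√m / (8 * K)) := by
    refine hf.le_of_forall_eventually_exists_piece hp S (r := ‖T‖ * m ^ (1 / p))
      (fun j => (nrmP_le_norm _).trans
        (T.le_opNorm_of_le (hF.norm_indicatorVec_le hp hv hm.pos hm.le_one j))) fun M => ?_
    filter_upwards [hF.eventually_exists_le_pairing_restrict hp hv hw hm hτ hST hT hS (max M N),
      hF.eventually_nrm2_map_lt hp hv hm.pos hT,
      (hf.tendsto_norm_restrict_Iio hp T N).eventually_lt_const ht]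
      with j ⟨E, hEge, hω, hE⟩ hj_nrm2 hj_head
    exact ⟨E, fun n hn => (le_max_left M N).trans (hEge n hn), hE,
      (hnot j E (fun n hn => (le_max_right M N).trans (hEge n hn)) hj_nrm2.le hj_head hω).le⟩
  refine hle.not_gt ?_
  calc √m * ‖S‖ * (√m / (8 * K)) = m / 8 * (‖S‖ / K) := by
        rw [mul_div_assoc', mul_right_comm, Real.mul_self_sqrt hm.pos.le]
        ring
    _ < m / 8 := mul_lt_of_lt_one_right (by linarith [hm.pos])
        ((div_lt_one ((norm_nonneg S).trans_lt hS)).2 hS)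

end IsBlockSeq

/-- `E` is a set of coordinates beyond `N`, of `ω`-measure at most `C * m`, that carries a fixed
proportion of `|x|_2`, where `|x|_2` and `m ^ ((p - 2) / (2 * p)) * ‖x‖` are comparable. The
condition is homogeneous in `x`. -/
structure IsTailPiece (p : ℝ) [Fact (1 ≤ ENNReal.ofReal p)] (w : ℕ → ℝ) (A C m : ℝ) (N : ℕ)
    (x : Xpw p w) (E : Finset ℕ) : Prop where
  le_of_mem : ∀ n ∈ E, N ≤ n
  norm_head_lt : ‖restrict (Set.Iio N) x‖ < (N : ℝ)⁻¹ * ‖x‖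
  omegaE_le : omegaE p w E ≤ C * m
  nrm2_le_restrict : nrm2 x ≤ A * nrm2 (restrict (E : Set ℕ) x)
  nrm2_le_norm : nrm2 x ≤ A * (m ^ ((p - 2) / (2 * p)) * ‖x‖)
  norm_le_restrict : m ^ ((p - 2) / (2 * p)) * ‖x‖ ≤ A * nrm2 (restrict (E : Set ℕ) x)

namespace IsTailPiece

open Xpw

variable [Fact (1 ≤ ENNReal.ofReal p)] {A C m : ℝ} {N : ℕ} {x : Xpw p w} {E : Finset ℕ}

theorem norm_pos (h : IsTailPiece p w A C m N x E) : 0 < ‖x‖ :=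
  norm_pos_iff.2 fun hx => by
    have := h.norm_head_lt
    rw [hx, norm_zero, mul_zero] at this
    exact this.not_ge (norm_nonneg _)

theorem smul (h : IsTailPiece p w A C m N x E) {s : ℝ} (hs : 0 < s) :
    IsTailPiece p w A C m N (s • x) E where
  le_of_mem := h.le_of_mem
  norm_head_lt := by
    rw [restrict_smul, norm_smul, norm_smul, mul_left_comm]
    exact mul_lt_mul_of_pos_left h.norm_head_lt (norm_pos_iff.2 hs.ne')
  omegaE_le := h.omegaE_le
  nrm2_le_restrict := by
    rw [restrict_smul, nrm2_smul, nrm2_smul, mul_left_comm]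
    exact mul_le_mul_of_nonneg_left h.nrm2_le_restrict (abs_nonneg s)
  nrm2_le_norm := by
    rw [nrm2_smul, norm_smul, mul_left_comm _ ‖s‖, mul_left_comm]
    exact mul_le_mul_of_nonneg_left h.nrm2_le_norm (abs_nonneg s)
  norm_le_restrict := by
    rw [restrict_smul, nrm2_smul, norm_smul, mul_left_comm, mul_left_comm A]
    exact mul_le_mul_of_nonneg_left h.norm_le_restrict (abs_nonneg s)

theorem norm_smul_self (h : IsTailPiece p w A C m N x E) : ‖‖x‖⁻¹ • x‖ = 1 :=
  norm_smul_inv_norm (𝕜 := ℝ) (norm_pos_iff.1 h.norm_pos)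

theorem nrm2_restrict_le_mul (h : IsTailPiece p w A C m N x E) (hx : ‖x‖ = 1) :
    nrm2 (restrict (E : Set ℕ) x) ≤ A * m ^ ((p - 2) / (2 * p)) := by
  simpa only [hx, mul_one] using (nrm2_restrict_le E x).trans h.nrm2_le_norm

theorem omegaE_rpow_le (h : IsTailPiece p w A C m N x E) (hp : 2 < p) (hw : ∀ n, 0 < w n)
    (hC : 0 ≤ C) (hm : 0 ≤ m) (hx : ‖x‖ = 1) :
    omegaE p w E ^ ((p - 2) / (2 * p)) ≤
      A * C ^ ((p - 2) / (2 * p)) * nrm2 (restrict (E : Set ℕ) x) := by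
  have hr : 0 ≤ (p - 2) / (2 * p) := div_nonneg (by linarith) (by linarith)
  have hnorm := h.norm_le_restrict
  rw [hx, mul_one] at hnorm
  calc omegaE p w E ^ ((p - 2) / (2 * p)) ≤ (C * m) ^ ((p - 2) / (2 * p)) :=
        Real.rpow_le_rpow (omegaE_coe_finset_nonneg hw E) h.omegaE_le hr
    _ = C ^ ((p - 2) / (2 * p)) * m ^ ((p - 2) / (2 * p)) := Real.mul_rpow hC hm
    _ ≤ C ^ ((p - 2) / (2 * p)) * (A * nrm2 (restrict (E : Set ℕ) x)) := by gcongr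
    _ = _ := by ring

theorem le_omegaE_rpow (h : IsTailPiece p w A C m N x E) (hp : 2 < p) (hw : ∀ n, 0 < w n)
    (hA : 0 < A) (hx : ‖x‖ = 1) :
    m ^ ((p - 2) / (2 * p)) / A ≤ omegaE p w E ^ ((p - 2) / (2 * p)) := by
  have hnorm := h.norm_le_restrict
  rw [hx, mul_one] at hnorm
  refine ((div_le_iff₀' hA).2 hnorm).trans ((nrm2_restrict_le_nrmP_mul hp hw E x).trans ?_)
  exact mul_le_of_le_one_left (Real.rpow_nonneg (omegaE_coe_finset_nonneg hw E) _)
    ((nrmP_le_norm x).trans hx.le)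

end IsTailPiece

theorem IsBlockSeq.exists_isTailPiece [Fact (1 ≤ ENNReal.ofReal p)] {v : ℕ → ℝ} {K τ m : ℝ}
    {F : ℕ → Finset ℕ} {T : Xpw p v →L[ℝ] Xpw p w} {S : Xpw p w →L[ℝ] Xpw p v} (hp : 2 < p)
    (hv : ∀ n, 0 < v n) (hw : ∀ n, 0 < w n) (hF : IsBlockSeq p v m F)
    (hm : AdmissibleScale p K τ m) (hτ : 0 < τ) (hST : Function.LeftInverse S T) (hT : ‖T‖ < K)
    (hS : ‖S‖ < K) {N : ℕ} (hN : 1 ≤ N) :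
    ∃ z E, IsTailPiece p w (8 * K ^ 2) (massConst p K τ) m N (T z) E := by
  have hK : 0 < K := (norm_nonneg T).trans_lt hT
  have : (0 : ℝ) < N := Nat.cast_pos.2 hN
  have hm0 := hm.pos
  have hroot := sqrt_eq_rpow_mul_rpow (p := p) (by linarith) hm0
  obtain ⟨j, E, hEN, hnrm2, hhead, hω, hE⟩ := hF.exists_le_nrm2_restrict hp hv hw hm hτ hST hT hS N
    (t := (N : ℝ)⁻¹ * (m ^ (1 / p) / (2 * K))) (by positivity)
  set x := T (Xpw.indicatorVec (F j))
  have hE' : K * √m ≤ 8 * K ^ 2 * nrm2 (restrict (E : Set ℕ) x) := by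
    rw [div_le_iff₀ (by positivity)] at hE
    calc K * √m ≤ K * (nrm2 (restrict (E : Set ℕ) x) * (8 * K)) := by gcongr
      _ = _ := by ring
  have hupper : ‖x‖ ≤ K * m ^ (1 / p) :=
    T.le_of_opNorm_le_of_le hT.le (hF.norm_indicatorVec_le hp hv hm0 hm.le_one j)
  have hlower : m ^ (1 / p) / 2 ≤ K * ‖x‖ := by
    refine (hF.le_norm_indicatorVec hp hv hm0 j).trans ?_
    simpa only [x, hST _] using S.le_of_opNorm_le hS.le x
  refine ⟨Xpw.indicatorVec (F j), E, hEN, hhead.trans_le ?_, hω, hnrm2.trans hE', ?_, ?_⟩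
  · gcongr
    rw [← div_div, div_le_iff₀' hK]
    exact hlower
  · calc nrm2 x ≤ 2 * K * (m ^ (1 / p) / 2 * m ^ ((p - 2) / (2 * p))) :=
          hnrm2.trans_eq (by rw [hroot]; ring)
      _ ≤ 8 * K * ((K * ‖x‖) * m ^ ((p - 2) / (2 * p))) := by gcongr; norm_num
      _ = _ := by ring
  · calc m ^ ((p - 2) / (2 * p)) * ‖x‖ ≤ m ^ ((p - 2) / (2 * p)) * (K * m ^ (1 / p)) := by gcongr
      _ = K * √m := by rw [hroot]; ring
      _ ≤ _ := hE'

theorem exists_forall_exists_isTailPiece [Fact (1 ≤ ENNReal.ofReal p)] {v : ℕ → ℝ} (hp : 2 < p)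
    (hv : IsXpWeight p v) (hw : ∀ n, 0 < w n) {T : Xpw p v →L[ℝ] Xpw p w}
    {S : Xpw p w →L[ℝ] Xpw p v} (hST : Function.LeftInverse S T) :
    ∃ A C : ℝ, 0 < A ∧ 0 < C ∧ ∀ᶠ m in nhdsWithin 0 (Set.Ioi 0), ∀ N : ℕ, 1 ≤ N →
      ∃ z E, IsTailPiece p w A C m N (T z) E := by
  obtain ⟨K, hK⟩ := exists_gt (max ‖T‖ ‖S‖)
  obtain ⟨hT, hS⟩ := max_lt_iff.1 hK
  have hK0 : 0 < K := (norm_nonneg T).trans_lt hT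
  obtain ⟨τ, hτ, hscale⟩ := exists_eventually_admissibleScale hp hK0
  refine ⟨8 * K ^ 2, massConst p K τ, by positivity, massConst_pos hK0 hτ,
    hscale.mono fun m hm N hN => ?_⟩
  obtain ⟨F, hF⟩ := hv.exists_isBlockSeq hp hm.pos
  exact hF.exists_isTailPiece hp hv.1 hw hm hτ hST hT hS hN

theorem exists_leftInverse_of_closedComplemented {R M G : Type*} [Ring R] [TopologicalSpace M]
    [AddCommGroup M] [Module R M] [TopologicalSpace G] [AddCommGroup G] [Module R G]
    {X : Submodule R M} (hX : X.ClosedComplemented) {Y : Submodule R X}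
    (hY : Y.ClosedComplemented) (e : Y ≃L[R] G) :
    ∃ (T : G →L[R] M) (S : M →L[R] G), Function.LeftInverse S T ∧ ∀ z, T z ∈ X := by
  obtain ⟨P, hP⟩ := hX
  obtain ⟨Q, hQ⟩ := hY
  refine ⟨X.subtypeL.comp (Y.subtypeL.comp (e.symm : G →L[R] Y)),
    (e : Y →L[R] G).comp (Q.comp P), fun z => ?_, fun z => (e.symm z : X).2⟩
  change e (Q (P (e.symm z : X))) = z
  rw [hP, hQ, e.apply_symm_apply]

theorem stmt7_general [Fact (1 ≤ ENNReal.ofReal p)] {v : ℕ → ℝ} (hp : 2 < p) (hv : IsXpWeight p v)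
    (hw : ∀ n, 0 < w n) (X : Submodule ℝ (Xpw p w)) {T : Xpw p v →L[ℝ] Xpw p w}
    {S : Xpw p w →L[ℝ] Xpw p v} (hST : Function.LeftInverse S T) (hTX : ∀ z, T z ∈ X) :
    ∃ c δ : ℝ, 0 < c ∧ 0 < δ ∧
      ∀ ε : ℝ, 0 < ε → ∃ ε' : ℝ, 0 < ε' ∧ ε' < ε ∧
        ∀ N : ℕ, 1 ≤ N → ∃ x : Xpw p w, x ∈ X ∧ ‖x‖ = 1 ∧
          ∃ E : Set ℕ, E.Finite ∧ E ⊆ {n : ℕ | N ≤ n} ∧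
            ‖restrict {n : ℕ | n < N} x‖ < (N : ℝ)⁻¹ ∧
            nrm2 (restrict E x) ≥ δ * nrm2 x ∧
            ε ≥ c * nrm2 (restrict E x) ∧
            c * nrm2 (restrict E x) ≥ omegaE p w E ^ ((p - 2) / (2 * p)) ∧
            omegaE p w E ^ ((p - 2) / (2 * p)) ≥ ε' := by
  obtain ⟨A, C, hA, hC, hpiece⟩ := exists_forall_exists_isTailPiece hp hv hw hST
  have hlim := tendsto_rpow_nhdsGT_zero (div_pos (sub_pos.2 hp) (by linarith : 0 < 2 * p))
  refine ⟨A * C ^ ((p - 2) / (2 * p)), A⁻¹, by positivity, by positivity, fun ε hε => ?_⟩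
  obtain ⟨m, ⟨⟨hpm, hm_upper⟩, hm_lower⟩, hm : 0 < m⟩ := (((hpiece.and
    ((hlim.const_mul (A * C ^ ((p - 2) / (2 * p)) * A)).eventually_lt_const (by simpa))).and
    ((hlim.div_const A).eventually_lt_const (by simpa))).and self_mem_nhdsWithin).exists
  refine ⟨m ^ ((p - 2) / (2 * p)) / A, by positivity, hm_lower, fun N hN => ?_⟩
  obtain ⟨z, E, hz⟩ := hpm N hN
  have hx : ‖‖T z‖⁻¹ • T z‖ = 1 := hz.norm_smul_self
  have hE := hz.smul (inv_pos.2 hz.norm_pos)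
  refine ⟨‖T z‖⁻¹ • T z, X.smul_mem _ (hTX z), hx, E, E.finite_toSet, hE.le_of_mem,
    hE.norm_head_lt.trans_eq (by rw [hx, mul_one]), (inv_mul_le_iff₀ hA).2 hE.nrm2_le_restrict,
    (mul_le_mul_of_nonneg_left (hE.nrm2_restrict_le_mul hx) (by positivity)).trans ?_,
    hE.omegaE_rpow_le hp hw hC.le hm.le hx, hE.le_omegaE_rpow hp hw hA hx⟩
  rw [← mul_assoc]
  exact hm_upper.le

/-- Theorem 1.3, 1 ⟹ 2: if `X` is a complemented subspace of `X_p` which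
contains a subspace `Y` isomorphic to `X_p` and complemented in `X`, then there are
constants `c, δ > 0` such that for every `ε > 0` there is `0 < ε' < ε` such that for
every `N` there are a norm-one `x ∈ X` and a finite set `E ⊆ {N, N+1, …}` with
(a) `‖x_{|[1,N]}‖ < N⁻¹`, (b) `|x_{|E}|_2 ≥ δ |x|_2`,
(c) `ε ≥ c |x_{|E}|_2 ≥ ω(E)^{(p-2)/(2p)} ≥ ε'`. -/
theorem stmt7 (p : ℝ) (hp : 2 < p) [Fact (1 ≤ ENNReal.ofReal p)]
    (w : ℕ → ℝ) (hw : IsXpWeight p w)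
    (X : Submodule ℝ (Xpw p w)) (hX : X.ClosedComplemented)
    (Y : Submodule ℝ ↥X)
    (hYcompl : Submodule.ClosedComplemented (R := ℝ) (M := ↥X) Y)
    (hYiso : Nonempty (↥Y ≃L[ℝ] Xpw p w)) :
    ∃ c δ : ℝ, 0 < c ∧ 0 < δ ∧
      ∀ ε : ℝ, 0 < ε → ∃ ε' : ℝ, 0 < ε' ∧ ε' < ε ∧
        ∀ N : ℕ, 1 ≤ N → ∃ x : Xpw p w, x ∈ X ∧ ‖x‖ = 1 ∧
          ∃ E : Set ℕ, E.Finite ∧ E ⊆ {n : ℕ | N ≤ n} ∧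
            ‖restrict {n : ℕ | n < N} x‖ < (N : ℝ)⁻¹ ∧
            nrm2 (restrict E x) ≥ δ * nrm2 x ∧
            ε ≥ c * nrm2 (restrict E x) ∧
            c * nrm2 (restrict E x) ≥ omegaE p w E ^ ((p - 2) / (2 * p)) ∧
            omegaE p w E ^ ((p - 2) / (2 * p)) ≥ ε' := by
  obtain ⟨T, S, hST, hTX⟩ := exists_leftInverse_of_closedComplemented hX hYcompl hYiso.some
  exact stmt7_general hp hw hw.1 X hST hTX
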